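/- arXiv:q-alg/9605002 — 4 statements merged into one kernel-verified Lean document; each statement's English description precedes it below -/
import Mathlib

section
/- There exists exactly one sequence of functions (G_n)_{n≥0}, each G_n : (0,∞) → (0,∞), such that: (0) G_0(z) = z for all z > 0; and for every n ≥ 1: (1) G_n(z+1) = G_{n−1}(z)·G_n(z) for all z > 0; (2) G_n(1) = 1; (3) log G_n is infinitely differentiable on (0,∞) and the (n+1)-st derivative of z ↦ log G_n(z+1) is ≥ 0 for all z ≥ 0. (This hierarchy is the Vignéras multiple gamma functions; G_1 = Γ is the gamma function and G_2 = G is the Barnes G-function.) -/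
open scoped BigOperators

/-- The defining conditions for the Vignéras hierarchy of multiple gamma functions:
a sequence of functions `G n : (0,∞) → (0,∞)` with `G 0 z = z`, satisfying the recursion
`G n (z+1) = G (n-1) z * G n z`, normalization `G n 1 = 1`, and the generalized
Bohr–Mollerup condition: `log (G n)` is infinitely differentiable on `(0,∞)` and the
`(n+1)`-st derivative of `z ↦ log (G n (z+1))` is nonnegative for `z ≥ 0`. -/
def VignerasHierarchy (G : ℕ → ℝ → ℝ) : Prop :=
  (∀ n : ℕ, ∀ z : ℝ, 0 < z → 0 < G n z) ∧
  (∀ z : ℝ, 0 < z → G 0 z = z) ∧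
  (∀ n : ℕ, 1 ≤ n →
    (∀ z : ℝ, 0 < z → G n (z + 1) = G (n - 1) z * G n z) ∧
    G n 1 = 1 ∧
    ContDiffOn ℝ (⊤ : ℕ∞) (fun z => Real.log (G n z)) (Set.Ioi (0:ℝ)) ∧
    (∀ z : ℝ, 0 ≤ z → 0 ≤ iteratedDeriv (n + 1) (fun z => Real.log (G n (z + 1))) z))

open Filter Topology

/-- `D` is a sequence of successive derivatives on `(0,∞)`. -/
def VChain (D : ℕ → ℝ → ℝ) : Prop :=
  ∀ j : ℕ, ∀ z : ℝ, 0 < z → HasDerivAt (D j) (D (j + 1) z) z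

/-- The class in which the hierarchy is constructed. -/
def VClass (n : ℕ) (D : ℕ → ℝ → ℝ) : Prop :=
  VChain D ∧ (∀ j : ℕ, ∀ z : ℝ, 0 < z → 0 ≤ (-1 : ℝ) ^ j * D (n + 1 + j) z) ∧
    Tendsto (D (n + 1)) atTop (𝓝 0)

lemma v_mvt {f f' : ℝ → ℝ} (h : ∀ z : ℝ, 0 < z → HasDerivAt f (f' z) z) {a b : ℝ}
    (ha : 0 < a) (hab : a < b) : ∃ c ∈ Set.Ioo a b, f b - f a = f' c * (b - a) := by
  obtain ⟨c, hc, hc'⟩ := exists_hasDerivAt_eq_slope f f' hab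
    (fun x hx => (h x (lt_of_lt_of_le ha hx.1)).continuousAt.continuousWithinAt)
    (fun x hx => h x (ha.trans hx.1))
  refine ⟨c, hc, ?_⟩
  rw [hc']
  have : b - a ≠ 0 := by linarith
  field_simp

lemma v_const {f f' : ℝ → ℝ} (h : ∀ z : ℝ, 0 < z → HasDerivAt f (f' z) z)
    (h0 : ∀ z : ℝ, 0 < z → f' z = 0) {a b : ℝ} (ha : 0 < a) (hb : 0 < b) : f a = f b := by
  rcases lt_trichotomy a b with hab | hab | hab
  · obtain ⟨c, hc, e⟩ := v_mvt h ha hab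
    rw [h0 c (ha.trans hc.1)] at e; linarith
  · rw [hab]
  · obtain ⟨c, hc, e⟩ := v_mvt h hb hab
    rw [h0 c (hb.trans hc.1)] at e; linarith

lemma v_shift {f : ℝ → ℝ} {f' : ℝ} {c z : ℝ} (h : HasDerivAt f f' (z + c)) :
    HasDerivAt (fun x => f (x + c)) f' z := by
  exact h.comp_add_const z c

lemma v_antideriv {h : ℝ → ℝ} (hc : ∀ z : ℝ, 0 < z → ContinuousAt h z) :
    ∃ H : ℝ → ℝ, ∀ z : ℝ, 0 < z → HasDerivAt H (h z) z := by
  refine ⟨fun z => ∫ t in (1:ℝ)..z, h t, fun z hz => ?_⟩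
  have hco : ContinuousOn h (Set.Ioi 0) := fun x hx => (hc x hx).continuousWithinAt
  apply intervalIntegral.integral_hasDerivAt_right
  · apply ContinuousOn.intervalIntegrable
    apply hco.mono
    intro x hx
    rw [Set.mem_uIcc] at hx
    rw [Set.mem_Ioi]
    rcases hx with hx | hx <;> linarith [hx.1]
  · exact hco.stronglyMeasurableAtFilter isOpen_Ioi z hz
  · exact hc z hz

lemma v_step {h D : ℕ → ℝ → ℝ} (hh : VChain h) (hD : VChain D)
    (hd : ∀ z : ℝ, 0 < z → h 0 (z + 1) = h 0 z + D 1 z) :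
    ∃ E : ℕ → ℝ → ℝ, VChain E ∧ (∀ z : ℝ, 0 < z → E 0 (z + 1) = E 0 z + D 0 z) ∧
      ∀ j z, E (j + 2) z = h (j + 1) z := by
  obtain ⟨H, hH⟩ := v_antideriv (h := h 0) (fun z hz => (hh 0 z hz).continuousAt)
  set c := H (1 + 1) - H 1 - D 0 1 with hc
  have key : ∀ z : ℝ, 0 < z → H (z + 1) - H z - D 0 z = c := by
    intro z hz
    refine v_const (f := fun z => H (z + 1) - H z - D 0 z)
      (f' := fun z => h 0 (z + 1) - h 0 z - D 1 z) ?_ ?_ hz one_pos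
    · intro x hx
      exact ((v_shift (hH (x + 1) (by linarith))).sub (hH x hx)).sub (hD 0 x hx)
    · intro x hx
      rw [hd x hx]; ring
  refine ⟨fun i => match i with
    | 0 => fun z => H z - c * z
    | 1 => fun z => h 0 z - c
    | (j + 2) => h (j + 1), ?_, ?_, ?_⟩
  · intro j z hz
    match j with
    | 0 =>
      have := (hH z hz).sub ((hasDerivAt_id' z).const_mul c)
      rw [mul_one] at this
      exact this
    | 1 => simpa using (hh 0 z hz).sub_const c
    | (j + 2) => exact hh (j + 1) z hz
  · intro z hz
    have := key z hz
    simp only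
    linarith
  · intro j z; rfl

lemma v_descend (m : ℕ) : ∀ {g D : ℕ → ℝ → ℝ}, VChain g → VChain D →
    (∀ z : ℝ, 0 < z → g 0 (z + 1) = g 0 z + D m z) →
    ∃ E : ℕ → ℝ → ℝ, VChain E ∧ (∀ z : ℝ, 0 < z → E 0 (z + 1) = E 0 z + D 0 z) ∧
      ∀ j z, E (m + 1 + j) z = g (j + 1) z := by
  induction m with
  | zero =>
    intro g D hg hD h
    exact ⟨g, hg, h, fun j z => by rw [show 0 + 1 + j = j + 1 by ring]⟩
  | succ m ih =>
    intro g D hg hD h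
    obtain ⟨e, he, he1, he2⟩ := ih (g := g) (D := fun j => D (j + 1)) hg
      (fun j z hz => hD (j + 1) z hz) h
    obtain ⟨E, hE, hE1, hE2⟩ := v_step he hD he1
    refine ⟨E, hE, hE1, fun j z => ?_⟩
    rw [← he2 j z, show m + 1 + 1 + j = (m + j) + 2 by ring, hE2,
      show m + j + 1 = m + 1 + j by ring]

/-- `A` nonnegative, `-A' = B` nonnegative antitone. -/
lemma v_sum {A B : ℝ → ℝ} (hA : ∀ z : ℝ, 0 < z → 0 ≤ A z) (hB : ∀ z : ℝ, 0 < z → 0 ≤ B z)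
    (hd : ∀ z : ℝ, 0 < z → HasDerivAt A (-B z) z)
    (hanti : ∀ x y : ℝ, 0 < x → x ≤ y → B y ≤ B x) {z : ℝ} (hz : 0 < z) :
    Summable (fun k : ℕ => B (z + 1 + k)) ∧ ∑' k : ℕ, B (z + 1 + k) ≤ A z := by
  have hk : ∀ k : ℕ, 0 < z + k := fun k => by positivity
  have h1 : ∀ k : ℕ, B (z + 1 + k) ≤ A (z + k) - A (z + (k + 1 : ℕ)) := by
    intro k
    obtain ⟨c, hc, e⟩ := v_mvt (f := A) (f' := fun z => - B z) hd (hk k)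
      (show z + k < z + (k + 1 : ℕ) by push_cast; linarith)
    have := hanti c (z + 1 + k) ((hk k).trans hc.1) (by have := hc.2; push_cast at this; linarith)
    push_cast at *
    nlinarith
  have h2 : ∀ n : ℕ, ∑ k ∈ Finset.range n, B (z + 1 + k) ≤ A z := by
    intro n
    have : ∑ k ∈ Finset.range n, B (z + 1 + k) ≤ A z - A (z + n) := by
      induction n with
      | zero => simp
      | succ n ih =>
        rw [Finset.sum_range_succ]
        linarith [h1 n]
    linarith [hA _ (hk n)]
  have h0 : ∀ k : ℕ, 0 ≤ B (z + 1 + k) := fun k => hB _ (by positivity)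
  exact ⟨summable_of_sum_range_le h0 h2, Real.tsum_le_of_sum_range_le h0 h2⟩

lemma v_anti {f f' : ℝ → ℝ} (h : ∀ z : ℝ, 0 < z → HasDerivAt f (f' z) z)
    (h0 : ∀ z : ℝ, 0 < z → f' z ≤ 0) (x y : ℝ) (hx : 0 < x) (hxy : x ≤ y) : f y ≤ f x := by
  rcases hxy.eq_or_lt with rfl | hlt
  · exact le_rfl
  · obtain ⟨c, hc, e⟩ := v_mvt h hx hlt
    have := h0 c (hx.trans hc.1)
    nlinarith

lemma v_exists {n : ℕ} {D : ℕ → ℝ → ℝ} (hD : VClass n D) :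
    ∃ E : ℕ → ℝ → ℝ, VClass (n + 1) E ∧
      (∀ z : ℝ, 0 < z → E 0 (z + 1) = E 0 z + D 0 z) ∧ E 0 1 = 0 := by
  obtain ⟨hch, hs, ht⟩ := hD
  -- absolute values
  set A : ℕ → ℝ → ℝ := fun j z => (-1 : ℝ) ^ j * D (n + 1 + j) z with hAdef
  have hAd : ∀ j z, 0 < z → HasDerivAt (A j) (-A (j + 1) z) z := by
    intro j z hz
    have := (hch (n + 1 + j) z hz).const_mul ((-1 : ℝ) ^ j)
    refine this.congr_deriv ?_
    simp only [hAdef, pow_succ, add_assoc]; ring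
  have hanti : ∀ j x y, 0 < x → x ≤ y → A j y ≤ A j x := fun j =>
    v_anti (hAd j) (fun z hz => by linarith [hs (j + 1) z hz])
  have hsum : ∀ j z, 0 < z → Summable (fun k : ℕ => A (j + 1) (z + 1 + k)) ∧
      ∑' k : ℕ, A (j + 1) (z + 1 + k) ≤ A j z := fun j z hz =>
    v_sum (hs j) (hs (j + 1)) (hAd j) (hanti (j + 1)) hz
  have hsum' : ∀ j z, 0 < z → Summable (fun k : ℕ => A (j + 1) (z + k)) := by
    intro j z hz
    rw [← summable_nat_add_iff 1]
    refine (hsum j z hz).1.congr fun k => ?_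
    push_cast; congr 1; ring
  -- the sums
  set T : ℕ → ℝ → ℝ := fun j z => ∑' k : ℕ, A (j + 1) (z + k) with hTdef
  have hT0 : ∀ j z, 0 < z → 0 ≤ T j z := fun j z hz =>
    tsum_nonneg fun k => hs (j + 1) _ (by positivity)
  have hTd : ∀ j z, 0 < z → HasDerivAt (T j) (-T (j + 1) z) z := by
    intro j z hz
    have := hasDerivAt_tsum_of_isPreconnected (t := Set.Ioi (z / 2)) (y := z) (y₀ := z)
      (g := fun (k : ℕ) x => A (j + 1) (x + k)) (g' := fun (k : ℕ) x => -A (j + 1 + 1) (x + k))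
      (hsum' (j + 1) (z / 2) (by linarith)) isOpen_Ioi isPreconnected_Ioi
      (fun k y hy => v_shift (hAd (j + 1) _ (by
        have : z / 2 < y := hy
        have hk : (0 : ℝ) ≤ k := Nat.cast_nonneg k
        linarith)))
      (fun k y hy => by
        have hy : z / 2 < y := hy
        have hk : (0 : ℝ) ≤ k := Nat.cast_nonneg k
        rw [norm_neg, Real.norm_of_nonneg (hs (j + 1 + 1) _ (by linarith))]
        exact hanti _ _ _ (by linarith) (by linarith))
      (show z / 2 < z by linarith) (hsum' j z hz) (show z / 2 < z by linarith)
    rwa [tsum_neg] at this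
  have hTdel : ∀ z, 0 < z → T 0 (z + 1) = T 0 z - A 1 z := by
    intro z hz
    have := (hsum' 0 z hz).tsum_eq_zero_add
    simp only [hTdef]
    rw [this]
    simp only [Nat.cast_zero, add_zero, zero_add, add_sub_cancel_left]
    refine tsum_congr fun k => ?_
    push_cast; congr 1; ring
  have hTlim : Tendsto (T 0) atTop (𝓝 0) := by
    have h1 : Tendsto (fun z => T 0 (z + 1)) atTop (𝓝 0) := by
      refine tendsto_of_tendsto_of_tendsto_of_le_of_le' tendsto_const_nhds ht ?_ ?_
      · filter_upwards [eventually_gt_atTop 0] with z hz using hT0 0 _ (by linarith)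
      · filter_upwards [eventually_gt_atTop 0] with z hz
        exact (hsum 0 z hz).2.trans_eq (by simp [hAdef])
    have h2 := h1.comp (tendsto_atTop_add_const_right atTop (-1 : ℝ) tendsto_id)
    refine h2.congr fun x => by simp
  -- the base antiderivative
  obtain ⟨g, hg⟩ := v_antideriv (h := T 0) (fun z hz => (hTd 0 z hz).continuousAt)
  have hA0 : ∀ z, A 0 z = D (n + 1) z := fun z => by simp [hAdef]
  have hgdel : ∀ z, 0 < z → g (z + 1) = g z + D (n + 1) z := by
    have hconst : ∀ z, 0 < z → ∀ w, 0 < w →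
        g (z + 1) - g z - A 0 z = g (w + 1) - g w - A 0 w := by
      intro z hz w hw
      refine v_const (f := fun z => g (z + 1) - g z - A 0 z)
        (f' := fun z => T 0 (z + 1) - T 0 z - (-A 1 z)) ?_ ?_ hz hw
      · intro x hx
        exact ((v_shift (hg (x + 1) (by linarith))).sub (hg x hx)).sub (hAd 0 x hx)
      · intro x hx
        rw [hTdel x hx]; ring
    have hTa : ∀ x y, 0 < x → x ≤ y → T 0 y ≤ T 0 x :=
      v_anti (hTd 0) (fun z hz => by linarith [hT0 1 z hz])
    have hlim : Tendsto (fun z => g (z + 1) - g z) atTop (𝓝 0) := by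
      refine tendsto_of_tendsto_of_tendsto_of_le_of_le' tendsto_const_nhds hTlim ?_ ?_
      · filter_upwards [eventually_gt_atTop 0] with z hz
        obtain ⟨c, hc, e⟩ := v_mvt hg hz (show z < z + 1 by linarith)
        rw [e]
        have := hT0 0 c (hz.trans hc.1)
        simpa using this
      · filter_upwards [eventually_gt_atTop 0] with z hz
        obtain ⟨c, hc, e⟩ := v_mvt hg hz (show z < z + 1 by linarith)
        rw [e]
        have := hTa z c hz hc.1.le
        simpa using this
    intro z hz
    have hlim2 : Tendsto (fun w => g (w + 1) - g w - A 0 w) atTop (𝓝 (0 - 0)) :=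
      hlim.sub (ht.congr fun x => (hA0 x).symm)
    have hlim3 : Tendsto (fun w => g (w + 1) - g w - A 0 w) atTop
        (𝓝 (g (z + 1) - g z - A 0 z)) := by
      refine tendsto_const_nhds.congr' ?_
      filter_upwards [eventually_gt_atTop 0] with w hw using hconst z hz w hw
    have := tendsto_nhds_unique hlim2 hlim3
    rw [hA0] at this
    linarith
  obtain ⟨E, hE, hE1, hE2⟩ := v_descend (n + 1) (D := D)
    (g := fun i => match i with
      | 0 => g
      | (j + 1) => fun z => (-1 : ℝ) ^ j * T j z)
    (by
      intro j z hz
      match j with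
      | 0 => simpa using hg z hz
      | (j + 1) =>
        have := (hTd j z hz).const_mul ((-1 : ℝ) ^ j)
        refine this.congr_deriv ?_
        simp only [pow_succ]; ring) hch hgdel
  simp only at hE2
  refine ⟨fun i => match i with
    | 0 => fun z => E 0 z - E 0 1
    | (j + 1) => E (j + 1), ⟨?_, ?_, ?_⟩, ?_, ?_⟩
  · intro j z hz
    match j with
    | 0 => exact (hE 0 z hz).sub_const _
    | (j + 1) => exact hE (j + 1) z hz
  · intro j z hz
    rw [show n + 1 + 1 + j = (n + 1 + j) + 1 by ring]
    simp only
    rw [show n + 1 + j + 1 = n + 1 + 1 + j by ring, hE2, ← mul_assoc, ← mul_pow]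
    simpa using hT0 j z hz
  · simp only
    refine hTlim.congr fun z => ?_
    simpa using (hE2 0 z).symm
  · intro z hz
    simp only
    rw [hE1 z hz]; ring
  · simp

lemma v_log : ∃ D : ℕ → ℝ → ℝ, VClass 0 D ∧ D 0 = Real.log := by
  refine ⟨fun i => match i with
    | 0 => Real.log
    | (j + 1) => fun z => (-1 : ℝ) ^ j * (j.factorial : ℝ) * z ^ (-(j + 1 : ℤ)), ⟨?_, ?_, ?_⟩, rfl⟩
  · intro j z hz
    match j with
    | 0 => simpa using Real.hasDerivAt_log hz.ne'
    | (j + 1) =>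
      have := (hasDerivAt_zpow (-(j + 1 : ℤ)) z (Or.inl hz.ne')).const_mul
        ((-1 : ℝ) ^ j * (j.factorial : ℝ))
      refine this.congr_deriv ?_
      simp only [pow_succ, Nat.factorial_succ]
      push_cast
      rw [show (-((j : ℤ) + 1 + 1)) = -((j : ℤ) + 1) - 1 by ring]
      ring
  · intro j z hz
    rw [show 0 + 1 + j = j + 1 by ring]
    simp only
    rw [← mul_assoc, ← mul_assoc, ← mul_pow]
    simp only [neg_mul_neg, one_mul, one_pow]
    positivity
  · simpa using tendsto_inv_atTop_zero (𝕜 := ℝ)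

lemma v_contDiff {D : ℕ → ℝ → ℝ} (hD : VChain D) :
    ContDiffOn ℝ (⊤ : ℕ∞) (D 0) (Set.Ioi (0:ℝ)) := by
  have : ∀ m : ℕ, ∀ D : ℕ → ℝ → ℝ, VChain D → ContDiffOn ℝ m (D 0) (Set.Ioi (0:ℝ)) := by
    intro m
    induction m with
    | zero =>
      intro D hD
      exact contDiffOn_zero.2 fun x hx => (hD 0 x hx).continuousAt.continuousWithinAt
    | succ m ih =>
      intro D hD
      push_cast
      rw [contDiffOn_succ_iff_deriv_of_isOpen isOpen_Ioi]
      refine ⟨fun x hx => (hD 0 x hx).differentiableAt.differentiableWithinAt, by simp, ?_⟩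
      refine (ih (fun j => D (j + 1)) (fun j z hz => hD (j + 1) z hz)).congr ?_
      intro x hx
      exact (hD 0 x hx).deriv
  rw [contDiffOn_infty]
  exact fun m => this m D hD

lemma v_iter {D : ℕ → ℝ → ℝ} (hD : VChain D) (j : ℕ) :
    ∀ z : ℝ, 0 < z → iteratedDeriv j (D 0) z = D j z := by
  induction j with
  | zero => intro z hz; simp
  | succ j ih =>
    intro z hz
    rw [iteratedDeriv_succ, ← (hD j z hz).deriv]
    apply Filter.EventuallyEq.deriv_eq
    filter_upwards [isOpen_Ioi.mem_nhds hz] with x hx using ih x hx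

lemma v_ofContDiff {f : ℝ → ℝ} (hf : ContDiffOn ℝ (⊤ : ℕ∞) f (Set.Ioi (0:ℝ))) :
    VChain (fun j => iteratedDeriv j f) := by
  have : ∀ j : ℕ, ContDiffOn ℝ (⊤ : ℕ∞) (iteratedDeriv j f) (Set.Ioi (0:ℝ)) := by
    intro j
    induction j with
    | zero => simpa using hf
    | succ j ih =>
      rw [iteratedDeriv_succ]
      exact ((contDiffOn_infty_iff_deriv_of_isOpen isOpen_Ioi).1 ih).2
  intro j z hz
  simp only
  rw [iteratedDeriv_succ]
  exact (((contDiffOn_infty_iff_deriv_of_isOpen isOpen_Ioi).1 (this j)).1.differentiableAt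
    (isOpen_Ioi.mem_nhds hz)).hasDerivAt

lemma v_periodic {d : ℕ → ℝ → ℝ} (hd : VChain d)
    (hp : ∀ z : ℝ, 0 < z → d 0 (z + 1) = d 0 z) (j : ℕ) :
    ∀ z : ℝ, 0 < z → d j (z + 1) = d j z := by
  induction j with
  | zero => exact hp
  | succ j ih =>
    intro z hz
    have h1 := v_shift (hd j (z + 1) (by linarith))
    refine h1.unique ((hd j z hz).congr_of_eventuallyEq ?_)
    filter_upwards [isOpen_Ioi.mem_nhds hz] with x hx using ih x hx

lemma v_periodic_nat {f : ℝ → ℝ} (hp : ∀ z : ℝ, 0 < z → f (z + 1) = f z) (k : ℕ) :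
    ∀ z : ℝ, 0 < z → f (z + k) = f z := by
  induction k with
  | zero => simp
  | succ k ih =>
    intro z hz
    rw [← ih z hz, ← hp (z + k) (by positivity)]
    push_cast; congr 1; ring

lemma v_rigid (m : ℕ) : ∀ {d : ℕ → ℝ → ℝ}, VChain d →
    (∀ z : ℝ, 0 < z → d 0 (z + 1) = d 0 z) → (∀ z : ℝ, 0 < z → 0 ≤ d (m + 1) z) →
    ∀ z : ℝ, 0 < z → d 0 z = d 0 1 := by
  induction m with
  | zero =>
    intro d hd hp h
    have hm : ∀ x y, 0 < x → x ≤ y → d 0 x ≤ d 0 y := by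
      intro x y hx hxy
      have := v_anti (f := fun z => -d 0 z) (f' := fun z => -d 1 z)
        (fun z hz => (hd 0 z hz).neg) (fun z hz => by have := h z hz; simp at this; linarith)
        x y hx hxy
      simpa using this
    have hle : ∀ x y, 0 < x → 0 < y → d 0 x ≤ d 0 y := by
      intro x y hx hy
      obtain ⟨k, hk⟩ := exists_nat_ge x
      rw [← v_periodic_nat hp k y hy]
      exact hm _ _ hx (by linarith)
    intro z hz
    exact le_antisymm (hle _ _ hz one_pos) (hle _ _ one_pos hz)
  | succ m ih =>
    intro d hd hp h
    have h1 := ih (d := fun j => d (j + 1)) (fun j z hz => hd (j + 1) z hz)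
      (v_periodic hd hp 1) h
    obtain ⟨c, hc, e⟩ := v_mvt (hd 0) one_pos (show (1:ℝ) < 1 + 1 by norm_num)
    have h2 := hp 1 one_pos
    have hc0 : d 1 c = 0 := by
      simp only [zero_add] at e
      linarith
    have h3 : ∀ z, 0 < z → d 1 z = 0 := by
      intro z hz
      have a := h1 z hz
      have b := h1 c (one_pos.trans hc.1)
      simp only [zero_add] at a b
      rw [a, ← b, hc0]
    intro z hz
    exact v_const (hd 0) h3 hz one_pos

/-- uniqueness step -/
lemma v_unique {n : ℕ} {E F : ℕ → ℝ → ℝ} {φ : ℝ → ℝ} (hE : VClass n E) (hF : VChain F)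
    (hE1 : ∀ z : ℝ, 0 < z → E 0 (z + 1) = E 0 z + φ z)
    (hF1 : ∀ z : ℝ, 0 < z → F 0 (z + 1) = F 0 z + φ z)
    (hpos : ∀ z : ℝ, 1 ≤ z → 0 ≤ F (n + 1) z) (h1 : F 0 1 = E 0 1) :
    ∀ z : ℝ, 0 < z → F 0 z = E 0 z := by
  have hd : VChain (fun j z => F j z - E j z) := fun j z hz => (hF j z hz).sub (hE.1 j z hz)
  have hp : ∀ z : ℝ, 0 < z → F 0 (z + 1) - E 0 (z + 1) = F 0 z - E 0 z := fun z hz => by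
    rw [hE1 z hz, hF1 z hz]; ring
  have hpn := v_periodic hd hp (n + 1)
  have := v_rigid n hd hp (by
    intro z hz
    have hlim : Tendsto (fun k : ℕ => -E (n + 1) (z + k)) atTop (𝓝 (-0)) :=
      (hE.2.2.comp (tendsto_atTop_add_const_left atTop z tendsto_natCast_atTop_atTop)).neg
    rw [neg_zero] at hlim
    refine le_of_tendsto hlim ?_
    filter_upwards [eventually_ge_atTop 1] with k hk
    rw [← v_periodic_nat (f := fun z => F (n + 1) z - E (n + 1) z) hpn k z hz]
    have hk' : (1 : ℝ) ≤ k := by exact_mod_cast hk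
    have := hpos (z + k) (by linarith)
    linarith)
  intro z hz
  have := this z hz
  linarith

theorem vigneras_multiple_gamma_exists_unique :
    ∃ G : ℕ → ℝ → ℝ, VignerasHierarchy G ∧
      ∀ H : ℕ → ℝ → ℝ, VignerasHierarchy H →
        ∀ n : ℕ, ∀ z : ℝ, 0 < z → H n z = G n z := by
  obtain ⟨L, hL, hL0⟩ := v_log
  choose next hnext1 hnext2 hnext3 using @v_exists
  let S : (n : ℕ) → {D : ℕ → ℝ → ℝ // VClass n D} := fun n =>
    Nat.rec (motive := fun n => {D : ℕ → ℝ → ℝ // VClass n D}) ⟨L, hL⟩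
      (fun n D => ⟨next D.2, hnext1 D.2⟩) n
  have hS0 : (S 0).1 0 = Real.log := hL0
  have hSd : ∀ n z, 0 < z → (S (n + 1)).1 0 (z + 1) = (S (n + 1)).1 0 z + (S n).1 0 z :=
    fun n => hnext2 (S n).2
  have hS1 : ∀ n, (S (n + 1)).1 0 1 = 0 := fun n => hnext3 (S n).2
  generalize S = S at hS0 hSd hS1
  refine ⟨fun n z => Real.exp ((S n).1 0 z), ⟨fun n z _ => Real.exp_pos _, ?_, ?_⟩, ?_⟩
  · intro z hz
    simp only [hS0, Real.exp_log hz]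
  · intro n hn
    obtain ⟨n, rfl⟩ : ∃ m, n = m + 1 := ⟨n - 1, by omega⟩
    simp only [Real.log_exp]
    refine ⟨fun z hz => ?_, by rw [hS1, Real.exp_zero], v_contDiff (S (n + 1)).2.1, ?_⟩
    · rw [hSd n z hz, Real.exp_add, mul_comm]; rfl
    · intro z hz
      rw [iteratedDeriv_comp_add_const]
      beta_reduce
      rw [v_iter (S (n + 1)).2.1 _ _ (by linarith)]
      simpa using (S (n + 1)).2.2.1 0 (z + 1) (by linarith)
  · intro H hH n
    obtain ⟨hpos, hz, hn⟩ := hH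
    induction n with
    | zero =>
      intro z hz'
      simp only [hS0, Real.exp_log hz']
      exact hz z hz'
    | succ n ih =>
      obtain ⟨a, b, c, d⟩ := hn (n + 1) (by omega)
      simp only [Nat.add_sub_cancel] at a
      have key := v_unique (S (n + 1)).2 (v_ofContDiff c) (hSd n)
        (by
          intro z hz
          simp only [iteratedDeriv_zero]
          rw [a z hz, Real.log_mul (hpos _ _ hz).ne' (hpos _ _ hz).ne', ih z hz, Real.log_exp,
            add_comm])
        (by
          intro z hz
          have := d (z - 1) (by linarith)
          rw [iteratedDeriv_comp_add_const (n + 1 + 1) (fun z => Real.log (H (n + 1) z)) 1] at this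
          simpa using this)
        (by simp [b, hS1])
      intro z hz
      have := key z hz
      simp only [iteratedDeriv_zero] at this
      beta_reduce
      rw [← this, Real.exp_log (hpos _ _ hz)]
end

section
/- Fix q with 0 < q < 1. There exists exactly one sequence of functions (G_n(·;q))_{n≥0}, each G_n(·;q) : (0,∞) → (0,∞), such that: (0) G_0(z;q) = (1−q^z)/(1−q) for all z > 0; and for every n ≥ 1: (1) G_n(z+1;q) = G_{n−1}(z;q)·G_n(z;q) for all z > 0; (2) G_n(1;q) = 1; (3) log G_n(·;q) is infinitely differentiable on (0,∞) and the (n+1)-st derivative of z ↦ log G_n(z+1;q) is ≥ 0 for all z ≥ 0. (This hierarchy is the multiple q-gamma functions, a q-analogue of the generalized Bohr–Mollerup theorem.) -/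
open scoped BigOperators

/-- The defining conditions for the multiple `q`-gamma hierarchy (for fixed `0 < q < 1`):
a sequence of functions `G n : (0,∞) → (0,∞)` with `G 0 z = [z]_q = (1−q^z)/(1−q)`,
satisfying the recursion `G n (z+1) = G (n-1) z * G n z`, normalization `G n 1 = 1`, and a
`q`-analogue of the generalized Bohr–Mollerup condition: `log (G n)` is infinitely
differentiable on `(0,∞)` and the `(n+1)`-st derivative of `z ↦ log (G n (z+1))` is
nonnegative for `z ≥ 0`. -/
def QVignerasHierarchy (q : ℝ) (G : ℕ → ℝ → ℝ) : Prop :=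
  (∀ n : ℕ, ∀ z : ℝ, 0 < z → 0 < G n z) ∧
  (∀ z : ℝ, 0 < z → G 0 z = (1 - q ^ z) / (1 - q)) ∧
  (∀ n : ℕ, 1 ≤ n →
    (∀ z : ℝ, 0 < z → G n (z + 1) = G (n - 1) z * G n z) ∧
    G n 1 = 1 ∧
    ContDiffOn ℝ (⊤ : ℕ∞) (fun z => Real.log (G n z)) (Set.Ioi (0:ℝ)) ∧
    (∀ z : ℝ, 0 ≤ z → 0 ≤ iteratedDeriv (n + 1) (fun z => Real.log (G n (z + 1))) z))

section
open Set Filter Topology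

noncomputable def mqgT (q : ℝ) (a : ℕ → ℝ) (k : ℕ) (z : ℝ) : ℝ :=
  ∑' m : ℕ, a m * ((m:ℝ) + 1) ^ k * (q ^ z) ^ (m + 1)

lemma mqg_summable_aux (r : ℝ) (h0 : 0 ≤ r) (h1 : r < 1) (k : ℕ) :
    Summable (fun m : ℕ => ((m:ℝ) + 1) ^ k * r ^ (m + 1)) := by
  have h := summable_pow_mul_geometric_of_norm_lt_one (R := ℝ) k (r := r)
    (by rw [Real.norm_eq_abs, abs_of_nonneg h0]; exact h1)
  have h2 := (summable_nat_add_iff 1).mpr h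
  simpa using h2

lemma mqg_summable {q : ℝ} (hq0 : 0 < q) (hq1 : q < 1) {a : ℕ → ℝ} {C : ℝ}
    (ha : ∀ m, 0 ≤ a m) (haC : ∀ m, a m ≤ C) (k : ℕ) {z : ℝ} (hz : 0 < z) :
    Summable (fun m : ℕ => a m * ((m:ℝ) + 1) ^ k * (q ^ z) ^ (m + 1)) := by
  have hr0 : 0 < q ^ z := Real.rpow_pos_of_pos hq0 z
  have hr1 : q ^ z < 1 := Real.rpow_lt_one hq0.le hq1 hz
  refine Summable.of_nonneg_of_le (fun m => ?_) (fun m => ?_)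
    ((mqg_summable_aux (q ^ z) hr0.le hr1 k).mul_left C)
  · have := ha m
    positivity
  · rw [mul_assoc]
    exact mul_le_mul_of_nonneg_right (haC m) (by positivity)

lemma mqg_hasDerivAt {q : ℝ} (hq0 : 0 < q) (hq1 : q < 1) {a : ℕ → ℝ} {C : ℝ}
    (ha : ∀ m, 0 ≤ a m) (haC : ∀ m, a m ≤ C) (k : ℕ) {z : ℝ} (hz : 0 < z) :
    HasDerivAt (mqgT q a k) (Real.log q * mqgT q a (k + 1) z) z := by
  have hz2 : 0 < z / 2 := by linarith
  have hr0 : 0 < q ^ (z / 2) := Real.rpow_pos_of_pos hq0 _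
  have hr1 : q ^ (z / 2) < 1 := Real.rpow_lt_one hq0.le hq1 hz2
  have key := hasDerivAt_tsum_of_isPreconnected (𝕜 := ℝ) (F := ℝ)
    (u := fun m : ℕ => |Real.log q| * (a m * ((m:ℝ) + 1) ^ (k + 1) * (q ^ (z / 2)) ^ (m + 1)))
    (g := fun m z => a m * ((m:ℝ) + 1) ^ k * (q ^ z) ^ (m + 1))
    (g' := fun m z => Real.log q * (a m * ((m:ℝ) + 1) ^ (k + 1) * (q ^ z) ^ (m + 1)))
    (t := Ioi (z / 2)) (y₀ := z) (y := z)
    ((mqg_summable hq0 hq1 ha haC (k + 1) hz2).mul_left _)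
    isOpen_Ioi isPreconnected_Ioi
    (by
      intro m y _
      have h1 := ((hasDerivAt_id y).const_rpow hq0).pow (m + 1)
      have h2 := h1.const_mul (a m * ((m:ℝ) + 1) ^ k)
      refine HasDerivAt.congr_deriv h2 ?_
      simp only [id, Nat.add_sub_cancel]
      push_cast
      ring)
    (by
      intro m y hy
      have hy0 : 0 < q ^ y := Real.rpow_pos_of_pos hq0 y
      have hle : q ^ y ≤ q ^ (z / 2) :=
        Real.rpow_le_rpow_of_exponent_ge hq0 hq1.le (le_of_lt hy)
      have ham := ha m
      rw [norm_mul, Real.norm_eq_abs, Real.norm_eq_abs,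
        abs_of_nonneg (a := a m * ((m:ℝ) + 1) ^ (k + 1) * (q ^ y) ^ (m + 1)) (by positivity)]
      gcongr)
    (by simp; linarith) (mqg_summable hq0 hq1 ha haC k hz) (by simp; linarith)
  rw [tsum_mul_left] at key
  exact key

lemma mqg_contDiffOn {q : ℝ} (hq0 : 0 < q) (hq1 : q < 1) {a : ℕ → ℝ} {C : ℝ}
    (ha : ∀ m, 0 ≤ a m) (haC : ∀ m, a m ≤ C) (k : ℕ) :
    ContDiffOn ℝ (⊤ : ℕ∞) (mqgT q a k) (Ioi (0:ℝ)) := by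
  rw [contDiffOn_infty]
  intro n
  induction n generalizing k with
  | zero =>
    simp only [Nat.cast_zero, contDiffOn_zero]
    exact fun z hz => (mqg_hasDerivAt hq0 hq1 ha haC k hz).continuousAt.continuousWithinAt
  | succ n ih =>
    push_cast
    rw [contDiffOn_succ_iff_deriv_of_isOpen isOpen_Ioi]
    refine ⟨fun z hz =>
      (mqg_hasDerivAt hq0 hq1 ha haC k hz).differentiableAt.differentiableWithinAt, ?_, ?_⟩
    · intro h
      exact absurd h (by simp)
    · refine ((contDiffOn_const (c := Real.log q)).mul (ih (k + 1))).congr ?_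
      intro z hz
      exact (mqg_hasDerivAt hq0 hq1 ha haC k hz).deriv

lemma mqg_iteratedDeriv {q : ℝ} (hq0 : 0 < q) (hq1 : q < 1) {a : ℕ → ℝ} {C : ℝ}
    (ha : ∀ m, 0 ≤ a m) (haC : ∀ m, a m ≤ C) (j : ℕ) : ∀ {z : ℝ}, 0 < z →
    iteratedDeriv j (mqgT q a 0) z = Real.log q ^ j * mqgT q a j z := by
  induction j with
  | zero => intro z hz; simp
  | succ j ih =>
    intro z hz
    rw [iteratedDeriv_succ]
    have : iteratedDeriv j (mqgT q a 0) =ᶠ[𝓝 z] fun z => Real.log q ^ j * mqgT q a j z := by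
      filter_upwards [isOpen_Ioi.mem_nhds hz] with y hy using ih hy
    rw [this.deriv_eq, ((mqg_hasDerivAt hq0 hq1 ha haC j hz).const_mul _).deriv]
    ring

lemma mqg_nonneg {q : ℝ} (hq0 : 0 < q) {a : ℕ → ℝ}
    (ha : ∀ m, 0 ≤ a m) (k : ℕ) (z : ℝ) : 0 ≤ mqgT q a k z := by
  have hr0 : 0 < q ^ z := Real.rpow_pos_of_pos hq0 z
  refine tsum_nonneg fun m => ?_
  have := ha m
  positivity

lemma mqg_decay {q : ℝ} (hq0 : 0 < q) (hq1 : q < 1) {a : ℕ → ℝ} {C : ℝ}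
    (ha : ∀ m, 0 ≤ a m) (haC : ∀ m, a m ≤ C) (k : ℕ) {z : ℝ} (hz : 0 < z) :
    mqgT q a k (z + 1) ≤ q ^ z * mqgT q a k 1 := by
  have hr0 : 0 < q ^ z := Real.rpow_pos_of_pos hq0 z
  have hr1 : q ^ z < 1 := Real.rpow_lt_one hq0.le hq1 hz
  unfold mqgT
  rw [← tsum_mul_left]
  refine Summable.tsum_le_tsum (fun m => ?_) (mqg_summable hq0 hq1 ha haC k (by linarith))
    ((mqg_summable hq0 hq1 ha haC k one_pos).mul_left _)
  have := ha m
  rw [Real.rpow_add hq0, Real.rpow_one, mul_pow]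
  have h : (q ^ z) ^ (m + 1) ≤ q ^ z := pow_le_of_le_one hr0.le hr1.le (by simp)
  calc a m * ((m:ℝ) + 1) ^ k * ((q ^ z) ^ (m + 1) * q ^ (m + 1))
      ≤ a m * ((m:ℝ) + 1) ^ k * (q ^ z * q ^ (m + 1)) := by gcongr
    _ = _ := by ring

noncomputable def mqgB : ℕ → Polynomial ℝ
  | 0 => 1
  | (k + 1) => Polynomial.C (1 / ((k:ℝ) + 1)) * mqgB k * (Polynomial.X - Polynomial.C ((k:ℝ) + 1))

lemma mqgB_deg (k : ℕ) : (mqgB k).natDegree ≤ k := by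
  induction k with
  | zero => simp [mqgB]
  | succ k ih =>
    unfold mqgB
    refine Polynomial.natDegree_mul_le_of_le ?_ (Polynomial.natDegree_X_sub_C_le _)
    exact (Polynomial.natDegree_C_mul_le _ _).trans ih

lemma mqgB_one (k : ℕ) : (mqgB (k + 1)).eval 1 = 0 := by
  induction k with
  | zero => simp [mqgB]
  | succ k ih => rw [mqgB]; simp [ih]

lemma mqgB_shift (k : ℕ) (z : ℝ) :
    ((k:ℝ) + 1) * (mqgB (k + 1)).eval (z + 1) = z * (mqgB k).eval z := by
  induction k with
  | zero => simp [mqgB]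
  | succ k ih =>
    have hk : (k:ℝ) + 1 ≠ 0 := by positivity
    have hk2 : (k:ℝ) + 1 + 1 ≠ 0 := by positivity
    have e : (mqgB (k + 1)).eval (z + 1) = z * (mqgB k).eval z / ((k:ℝ) + 1) := by
      rw [← ih]; field_simp
    rw [mqgB]
    simp only [Polynomial.eval_mul, Polynomial.eval_C, Polynomial.eval_sub, Polynomial.eval_X, e]
    rw [mqgB]
    simp only [Polynomial.eval_mul, Polynomial.eval_C, Polynomial.eval_sub, Polynomial.eval_X]
    push_cast
    field_simp
    ring

lemma mqgB_rec (k : ℕ) (z : ℝ) :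
    (mqgB (k + 1)).eval (z + 1) = (mqgB k).eval z + (mqgB (k + 1)).eval z := by
  have hk : (k:ℝ) + 1 ≠ 0 := by positivity
  have e : (mqgB (k + 1)).eval (z + 1) = z * (mqgB k).eval z / ((k:ℝ) + 1) := by
    rw [← mqgB_shift]; field_simp
  rw [e, mqgB]
  simp only [Polynomial.eval_mul, Polynomial.eval_C, Polynomial.eval_sub, Polynomial.eval_X]
  field_simp
  ring

noncomputable def mqgP (c : ℕ → ℝ) (n : ℕ) : Polynomial ℝ :=
  ∑ j ∈ Finset.range (n + 1), Polynomial.C (c j) * mqgB (n - j)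

lemma mqgP_deg (c : ℕ → ℝ) (n : ℕ) : (mqgP c n).natDegree ≤ n := by
  refine Polynomial.natDegree_sum_le_of_forall_le _ _ fun j _ => ?_
  exact (Polynomial.natDegree_C_mul_le _ _).trans ((mqgB_deg _).trans (Nat.sub_le _ _))

lemma mqgP_one (c : ℕ → ℝ) (n : ℕ) : (mqgP c n).eval 1 = c n := by
  unfold mqgP
  rw [Finset.sum_range_succ, Polynomial.eval_add, Polynomial.eval_finsetSum,
    Finset.sum_eq_zero]
  · simp [mqgB]
  · intro j hj
    have : j < n := Finset.mem_range.mp hj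
    obtain ⟨i, hi⟩ : ∃ i, n - j = i + 1 := ⟨n - j - 1, by omega⟩
    rw [hi]; simp [mqgB_one]

lemma mqgP_rec (c : ℕ → ℝ) (n : ℕ) (z : ℝ) :
    (mqgP c (n + 1)).eval (z + 1) = (mqgP c n).eval z + (mqgP c (n + 1)).eval z := by
  unfold mqgP
  rw [Finset.sum_range_succ]
  simp only [Polynomial.eval_add, Polynomial.eval_finsetSum, Polynomial.eval_mul,
    Polynomial.eval_C, Nat.sub_self]
  rw [← add_assoc, ← Finset.sum_add_distrib]
  congr 1
  · refine Finset.sum_congr rfl fun j hj => ?_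
    have : j < n + 1 := Finset.mem_range.mp hj
    have hi : n + 1 - j = (n - j) + 1 := by omega
    rw [hi, mqgB_rec]; ring
  · simp [mqgB]

lemma mqg_poly_iter (j : ℕ) : ∀ P : Polynomial ℝ, 
    iteratedDeriv j (fun z => P.eval z) = fun z => ((Polynomial.derivative)^[j] P).eval z := by
  induction j with
  | zero => intro P; simp
  | succ j ih =>
    intro P
    rw [iteratedDeriv_succ']
    have : deriv (fun z => P.eval z) = fun z => P.derivative.eval z := by
      ext z; simp
    rw [this, ih, Function.iterate_succ_apply]

lemma mqg_periodic_nat {d : ℝ → ℝ} (hp : ∀ z, 0 < z → d (z + 1) = d z) (N : ℕ) :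
    ∀ z, 0 < z → d (z + N) = d z := by
  induction N with
  | zero => intro z _; simp
  | succ N ih =>
    intro z hz
    push_cast
    rw [← add_assoc, hp _ (by positivity), ih z hz]

lemma mqg_periodic_iter {d : ℝ → ℝ} (hp : ∀ z, 0 < z → d (z + 1) = d z) (j : ℕ) :
    ∀ z, 0 < z → iteratedDeriv j d (z + 1) = iteratedDeriv j d z := by
  intro z hz
  have h := congrFun (iteratedDeriv_comp_add_const j d 1) z
  rw [← h]
  refine Filter.EventuallyEq.iteratedDeriv_eq j ?_
  filter_upwards [isOpen_Ioi.mem_nhds hz] with y hy using hp y hy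

lemma mqg_unique_aux (k : ℕ) : ∀ d : ℝ → ℝ, ContDiffOn ℝ (⊤ : ℕ∞) d (Ioi (0:ℝ)) →
    (∀ z, 0 < z → d (z + 1) = d z) → (∀ z, 0 < z → 0 ≤ iteratedDeriv (k + 1) d z) →
    ∀ z, 0 < z → d z = d 1 := by
  induction k with
  | zero =>
    intro d hd hp hn
    have hm : MonotoneOn d (Ioi (0:ℝ)) := by
      refine monotoneOn_of_deriv_nonneg (convex_Ioi 0) hd.continuousOn ?_ ?_
      · rw [interior_Ioi]; exact hd.differentiableOn (by simp)
      · rw [interior_Ioi]; intro x hx; simpa using hn x hx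
    intro z hz
    obtain ⟨N, hN⟩ := exists_nat_ge z
    apply le_antisymm
    · rw [← mqg_periodic_nat hp N 1 one_pos]
      exact hm hz (by simp; positivity) (by linarith)
    · rw [← mqg_periodic_nat hp 1 z hz]
      exact hm (by simp) (by simp; positivity) (by simp; linarith)
  | succ k ih =>
    intro d hd hp hn
    have hd' := (contDiffOn_infty_iff_deriv_of_isOpen isOpen_Ioi).mp hd
    have hc := ih (deriv d) hd'.2
      (by simpa using mqg_periodic_iter hp 1)
      (by intro z hz; rw [← iteratedDeriv_succ']; exact hn z hz)
    have hdd : ∀ z, 0 < z → DifferentiableAt ℝ d z := fun z hz =>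
      (hd'.1 z hz).differentiableAt (isOpen_Ioi.mem_nhds hz)
    have h1 : deriv d 1 = 0 := by
      obtain ⟨x, hx, hxe⟩ := exists_deriv_eq_slope d (a := 1) (b := 1 + 1) (by norm_num)
        (hd.continuousOn.mono (fun x hx => lt_of_lt_of_le one_pos hx.1))
        (hd'.1.mono (fun x hx => lt_trans one_pos hx.1))
      rw [hp 1 one_pos, sub_self, zero_div] at hxe
      rw [← hc x (lt_trans one_pos hx.1), hxe]
    intro z hz
    refine IsOpen.is_const_of_deriv_eq_zero isOpen_Ioi isPreconnected_Ioi hd'.1 ?_ hz (mem_Ioi.mpr one_pos)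
    intro x hx
    simp [hc x hx, h1]

noncomputable def mqgA (q : ℝ) (n m : ℕ) : ℝ := 1 / (((m:ℝ) + 1) * (1 - q ^ (m + 1)) ^ n)

lemma mqgA_nonneg {q : ℝ} (hq0 : 0 < q) (hq1 : q < 1) (n m : ℕ) : 0 ≤ mqgA q n m := by
  have : 0 ≤ 1 - q ^ (m + 1) := sub_nonneg.mpr (pow_le_one₀ hq0.le hq1.le)
  unfold mqgA
  positivity

lemma mqgA_le {q : ℝ} (hq0 : 0 < q) (hq1 : q < 1) (n m : ℕ) :
    mqgA q n m ≤ 1 / (1 - q) ^ n := by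
  have h1 : q ^ (m + 1) ≤ q := pow_le_of_le_one hq0.le hq1.le (by simp)
  have h2 : 0 < 1 - q := by linarith
  unfold mqgA
  apply one_div_le_one_div_of_le (by positivity)
  have h3 : (1 - q) ^ n ≤ (1 - q ^ (m + 1)) ^ n := by gcongr
  have h4 : 0 ≤ (1 - q) ^ n := by positivity
  have h5 : (0:ℝ) ≤ m := by positivity
  nlinarith

lemma mqg_S_rec {q : ℝ} (hq0 : 0 < q) (hq1 : q < 1) (n : ℕ) {z : ℝ} (hz : 0 < z) :
    mqgT q (mqgA q (n + 1)) 0 (z + 1) =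
      mqgT q (mqgA q (n + 1)) 0 z - mqgT q (mqgA q n) 0 z := by
  have s1 := mqg_summable hq0 hq1 (mqgA_nonneg hq0 hq1 (n + 1)) (mqgA_le hq0 hq1 (n + 1)) 0 hz
  have s2 := mqg_summable hq0 hq1 (mqgA_nonneg hq0 hq1 n) (mqgA_le hq0 hq1 n) 0 hz
  unfold mqgT
  rw [← s1.tsum_sub s2]
  refine tsum_congr fun m => ?_
  have h : q ^ (m + 1) < 1 := pow_lt_one₀ hq0.le hq1 (by simp)
  have h2 : 1 - q ^ (m + 1) ≠ 0 := by linarith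
  have h3 : (m:ℝ) + 1 ≠ 0 := by positivity
  rw [Real.rpow_add hq0, Real.rpow_one, mul_pow]
  unfold mqgA
  rw [pow_succ (1 - q ^ (m + 1)) n]
  generalize q ^ (m + 1) = w at *
  field_simp
  ring

lemma mqg_S_zero {q : ℝ} (hq0 : 0 < q) (hq1 : q < 1) {z : ℝ} (hz : 0 < z) :
    mqgT q (mqgA q 0) 0 z = - Real.log (1 - q ^ z) := by
  have hr0 : 0 < q ^ z := Real.rpow_pos_of_pos hq0 z
  have hr1 : q ^ z < 1 := Real.rpow_lt_one hq0.le hq1 hz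
  rw [← (Real.hasSum_pow_div_log_of_abs_lt_one (x := q ^ z)
    (by rw [abs_of_pos hr0]; exact hr1)).tsum_eq]
  refine tsum_congr fun m => ?_
  simp [mqgA]
  ring

noncomputable def mqgc (q : ℝ) : ℕ → ℝ
  | 0 => - Real.log (1 - q)
  | (n + 1) => - ((-1) ^ (n + 2) * mqgT q (mqgA q (n + 1)) 0 1)

noncomputable def mqgf (q : ℝ) (n : ℕ) (z : ℝ) : ℝ :=
  (mqgP (mqgc q) n).eval z + (-1) ^ (n + 1) * mqgT q (mqgA q n) 0 z

lemma mqg_poly_contDiff {n : WithTop ℕ∞} (P : Polynomial ℝ) :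
    ContDiff ℝ n (fun z => P.eval z) := by
  simpa using P.contDiff_aeval (𝕜 := ℝ) n

lemma mqgf_contDiffOn {q : ℝ} (hq0 : 0 < q) (hq1 : q < 1) (n : ℕ) :
    ContDiffOn ℝ (⊤ : ℕ∞) (mqgf q n) (Ioi (0:ℝ)) := by
  unfold mqgf
  refine ContDiffOn.add (mqg_poly_contDiff _).contDiffOn (contDiffOn_const.mul ?_)
  exact mqg_contDiffOn hq0 hq1 (mqgA_nonneg hq0 hq1 n) (mqgA_le hq0 hq1 n) 0

lemma mqgf_iter {q : ℝ} (hq0 : 0 < q) (hq1 : q < 1) (n : ℕ) {z : ℝ} (hz : 0 < z) :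
    iteratedDeriv (n + 1) (mqgf q n) z =
      (- Real.log q) ^ (n + 1) * mqgT q (mqgA q n) (n + 1) z := by
  have hS : ContDiffAt ℝ ((n + 1 : ℕ) : WithTop ℕ∞) (mqgT q (mqgA q n) 0) z :=
    ((mqg_contDiffOn hq0 hq1 (mqgA_nonneg hq0 hq1 n) (mqgA_le hq0 hq1 n) 0).contDiffAt
      (isOpen_Ioi.mem_nhds hz)).of_le (by exact_mod_cast le_top)
  unfold mqgf
  rw [iteratedDeriv_fun_add (mqg_poly_contDiff _).contDiffAt (contDiffAt_const.mul hS),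
    iteratedDeriv_const_mul _ hS,
    mqg_iteratedDeriv hq0 hq1 (mqgA_nonneg hq0 hq1 n) (mqgA_le hq0 hq1 n) _ hz,
    mqg_poly_iter, Polynomial.iterate_derivative_eq_zero (Nat.lt_succ_of_le (mqgP_deg _ _)),
    neg_pow (Real.log q)]
  simp
  ring

lemma mqgf_rec {q : ℝ} (hq0 : 0 < q) (hq1 : q < 1) (n : ℕ) {z : ℝ} (hz : 0 < z) :
    mqgf q (n + 1) (z + 1) = mqgf q n z + mqgf q (n + 1) z := by
  unfold mqgf
  rw [mqgP_rec, mqg_S_rec hq0 hq1 n hz]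
  ring

lemma mqgf_hier {q : ℝ} (hq0 : 0 < q) (hq1 : q < 1) :
    QVignerasHierarchy q (fun n z => Real.exp (mqgf q n z)) := by
  have hlog : 0 ≤ - Real.log q := by
    have := Real.log_neg hq0 hq1
    linarith
  refine ⟨fun n z _ => Real.exp_pos _, ?_, ?_⟩
  · intro z hz
    have hr1 : q ^ z < 1 := Real.rpow_lt_one hq0.le hq1 hz
    have : mqgf q 0 z = Real.log (1 - q ^ z) - Real.log (1 - q) := by
      unfold mqgf
      rw [mqg_S_zero hq0 hq1 hz]
      simp [mqgP, mqgc, mqgB]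
      ring
    simp only [this]
    rw [Real.exp_sub, Real.exp_log (by linarith), Real.exp_log (by linarith)]
  · intro n hn
    obtain ⟨n, rfl⟩ : ∃ k, n = k + 1 := ⟨n - 1, by omega⟩
    refine ⟨?_, ?_, ?_, ?_⟩
    · intro z hz
      simp only [Nat.add_sub_cancel]
      rw [mqgf_rec hq0 hq1 n hz, Real.exp_add]
    · simp only [mqgf, mqgP_one, mqgc]
      simp
    · simp only [Real.log_exp]
      exact mqgf_contDiffOn hq0 hq1 (n + 1)
    · intro z hz
      simp only [Real.log_exp]
      rw [iteratedDeriv_comp_add_const]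
      simp only
      rw [mqgf_iter hq0 hq1 (n + 1) (by linarith)]
      exact mul_nonneg (pow_nonneg hlog _) (mqg_nonneg hq0 (mqgA_nonneg hq0 hq1 _) _ _)

lemma mqg_unique {q : ℝ} (hq0 : 0 < q) (hq1 : q < 1) (H : ℕ → ℝ → ℝ)
    (hH : QVignerasHierarchy q H) (n : ℕ) :
    ∀ z : ℝ, 0 < z → H n z = Real.exp (mqgf q n z) := by
  have hG := mqgf_hier hq0 hq1
  induction n with
  | zero =>
    intro z hz
    rw [hH.2.1 z hz]
    exact (hG.2.1 z hz).symm
  | succ n ih =>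
    obtain ⟨hr, h1, hs, hi⟩ := hH.2.2 (n + 1) (by omega)
    have hg1 := (hG.2.2 (n + 1) (by omega)).2.1
    have hpos := hH.1
    simp only [Nat.add_sub_cancel] at hr
    have hper : ∀ z, 0 < z → (fun z => Real.log (H (n + 1) z) - mqgf q (n + 1) z) (z + 1) =
        (fun z => Real.log (H (n + 1) z) - mqgf q (n + 1) z) z := by
      intro z hz
      simp only
      rw [hr z hz, Real.log_mul (hpos n z hz).ne' (hpos (n + 1) z hz).ne', ih z hz,
        Real.log_exp, mqgf_rec hq0 hq1 n hz]
      ring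
    have hfs := mqgf_contDiffOn hq0 hq1 (n + 1)
    have hnn : ∀ z, 0 < z → 0 ≤ iteratedDeriv (n + 1 + 1)
        (fun z => Real.log (H (n + 1) z) - mqgf q (n + 1) z) z := by
      intro z hz
      have hb : ∀ N : ℕ, - ((- Real.log q) ^ (n + 1 + 1) *
          (q ^ (z + N) * mqgT q (mqgA q (n + 1)) (n + 1 + 1) 1)) ≤ iteratedDeriv (n + 1 + 1)
          (fun z => Real.log (H (n + 1) z) - mqgf q (n + 1) z) z := by
        intro N
        have hzN : 0 < z + N := by positivity
        have hzN1 : 0 < z + N + 1 := by positivity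
        rw [← mqg_periodic_nat (mqg_periodic_iter hper (n + 1 + 1)) N z hz,
          ← mqg_periodic_iter hper (n + 1 + 1) _ hzN,
          iteratedDeriv_fun_sub
            ((hs.contDiffAt (isOpen_Ioi.mem_nhds hzN1)).of_le (by exact_mod_cast le_top))
            ((hfs.contDiffAt (isOpen_Ioi.mem_nhds hzN1)).of_le (by exact_mod_cast le_top)),
          mqgf_iter hq0 hq1 (n + 1) hzN1]
        have a1 := hi (z + N) hzN.le
        rw [iteratedDeriv_comp_add_const (n + 1 + 1) (fun z => Real.log (H (n + 1) z)) 1] at a1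
        have a2 := mqg_decay hq0 hq1 (mqgA_nonneg hq0 hq1 (n + 1)) (mqgA_le hq0 hq1 (n + 1))
          (n + 1 + 1) hzN
        have hlog : 0 ≤ - Real.log q := by
          have := Real.log_neg hq0 hq1
          linarith
        have a3 := mul_le_mul_of_nonneg_left a2 (pow_nonneg hlog (n + 1 + 1))
        simp only at a1
        linarith
      have ht : Tendsto (fun N : ℕ => - ((- Real.log q) ^ (n + 1 + 1) *
          (q ^ (z + N) * mqgT q (mqgA q (n + 1)) (n + 1 + 1) 1))) atTop (𝓝 0) := by
        have t1 : Tendsto (fun N : ℕ => q ^ (z + N)) atTop (𝓝 0) := by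
          have t2 := (tendsto_pow_atTop_nhds_zero_of_lt_one hq0.le hq1).const_mul (q ^ z)
          rw [mul_zero] at t2
          refine t2.congr fun N => ?_
          rw [Real.rpow_add hq0, Real.rpow_natCast]
        have t3 := ((t1.mul_const (mqgT q (mqgA q (n + 1)) (n + 1 + 1) 1)).const_mul
          ((- Real.log q) ^ (n + 1 + 1))).neg
        simpa using t3
      exact le_of_tendsto' ht hb
    intro z hz
    have hc := mqg_unique_aux (n + 1) _ (hs.sub hfs) hper hnn z hz
    simp only at hc hg1
    rw [h1, Real.log_one] at hc
    have hf1 : mqgf q (n + 1) 1 = 0 := by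
      rwa [Real.exp_eq_one_iff] at hg1
    rw [hf1, sub_zero, sub_eq_zero] at hc
    rw [← hc, Real.exp_log (hpos (n + 1) z hz)]

end

/-- For each fixed `0 < q < 1` there exists exactly one hierarchy of functions `(G_n(·;q))`
on `(0,∞)` satisfying the `q`-analogue of the generalized Bohr–Mollerup conditions
(the multiple `q`-gamma functions). -/
theorem multiple_q_gamma_exists_unique (q : ℝ) (hq0 : 0 < q) (hq1 : q < 1) :
    ∃ G : ℕ → ℝ → ℝ, QVignerasHierarchy q G ∧
      ∀ H : ℕ → ℝ → ℝ, QVignerasHierarchy q H →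
        ∀ n : ℕ, ∀ z : ℝ, 0 < z → H n z = G n z := by
  exact ⟨fun n z => Real.exp (mqgf q n z), mqgf_hier hq0 hq1, fun H hH n => mqg_unique hq0 hq1 H hH n⟩
end

section
/- Let j ≥ 0 and n ≥ j+1 be integers, and define C_j := −Σ_{r=1}^{n+1} (B_r/r!)·[(d/dt)^{r−1}(t^j log t)] evaluated at t = 1 + ((−1)^n/(n+1)!)·∫_1^∞ B̄_{n+1}(t)·(d/dt)^{n+1}(t^j log t) dt. Then C_j = −ζ'(−j) − 1/(j+1)². In particular C_j does not depend on n. -/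
open scoped BigOperators

noncomputable section

/-- Bernoulli polynomial `B_m(t)` evaluated at a real number. -/
def BPR (m : ℕ) (t : ℝ) : ℝ := Polynomial.aeval t (Polynomial.bernoulli m)

/-- Periodized Bernoulli polynomial `B̄_m(t) = B_m(t − ⌊t⌋)`. -/
def BBar (m : ℕ) (t : ℝ) : ℝ := BPR m (t - ⌊t⌋)

/-- The constant `C_j` (defined using an auxiliary integer `n ≥ j+1`):
`C_j = −Σ_{r=1}^{n+1} (B_r/r!)·[(d/dt)^{r−1}(t^j log t)]_{t=1}
 + ((−1)^n/(n+1)!)·∫_1^∞ B̄_{n+1}(t)·(d/dt)^{n+1}(t^j log t) dt`. -/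
def Cclassical (n j : ℕ) : ℝ :=
  -(∑ r ∈ Finset.Icc 1 (n+1), ((bernoulli r : ℚ) : ℝ) / r.factorial *
      iteratedDeriv (r-1) (fun t : ℝ => t^j * Real.log t) 1)
  + ((-1:ℝ)^n / (n+1).factorial) *
      ∫ t in Set.Ioi (1:ℝ), BBar (n+1) t *
        iteratedDeriv (n+1) (fun t : ℝ => t^j * Real.log t) t

open MeasureTheory Set Filter Topology Asymptotics

lemma BPR_eq (m : ℕ) (t : ℝ) : BPR m t = bernoulliFun m t := by
  simp [BPR, bernoulliFun, Polynomial.eval_map_algebraMap]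

lemma BBar_eq (m : ℕ) (t : ℝ) : BBar m t = bernoulliFun m (Int.fract t) := by
  rw [BBar, BPR_eq]; rfl

lemma BBar_meas (m : ℕ) : Measurable (BBar m) := by
  have : BBar m = fun t => bernoulliFun m (Int.fract t) := funext (BBar_eq m)
  rw [this]
  exact (continuous_bernoulliFun m).measurable.comp measurable_fract

lemma BBar_bdd (m : ℕ) : ∃ C : ℝ, ∀ t, ‖(BBar m t : ℂ)‖ ≤ C := by
  obtain ⟨C, hC⟩ := (isCompact_Icc (a := (0:ℝ)) (b := 1)).exists_bound_of_continuousOn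
    (continuous_bernoulliFun m).continuousOn
  refine ⟨C, fun t => ?_⟩
  rw [Complex.norm_real, BBar_eq]
  exact hC _ ⟨Int.fract_nonneg t, (Int.fract_lt_one t).le⟩

lemma BBar_cont (m : ℕ) (hm : m ≠ 1) : Continuous (BBar m) := by
  have : BBar m = bernoulliFun m ∘ Int.fract := funext (BBar_eq m)
  rw [this]
  exact ContinuousOn.comp_fract'' (continuous_bernoulliFun m).continuousOn
    (bernoulliFun_endpoints_eq_of_ne_one hm).symm

lemma BBar_deriv (m : ℕ) (t : ℝ) (ht : t ∉ Set.range ((↑) : ℤ → ℝ)) :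
    HasDerivAt (BBar (m+1)) ((m+1) * BBar m t) t := by
  have h1 : HasDerivAt (fun x : ℝ => bernoulliFun (m+1) (x - ⌊t⌋)) ((m+1) * BBar m t) t := by
    have := (hasDerivAt_bernoulliFun (m+1) (t - ⌊t⌋)).comp_sub_const t (⌊t⌋:ℝ)
    rw [BBar, BPR_eq]
    simpa using this
  refine h1.congr_of_eventuallyEq ?_
  have hlt : (⌊t⌋:ℝ) < t := lt_of_le_of_ne (Int.floor_le t) (fun h => ht ⟨_, h⟩)
  filter_upwards [Ioo_mem_nhds hlt (Int.lt_floor_add_one t)] with x hx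
  have : ⌊x⌋ = ⌊t⌋ := Int.floor_eq_iff.2 ⟨hx.1.le, hx.2⟩
  rw [BBar, BPR_eq, this]

def BI (m : ℕ) (s : ℂ) : ℂ := ∫ t in Ioi (1:ℝ), (BBar m t : ℂ) * (t:ℂ)^(-s-m)

def BP : ℕ → ℂ → ℂ
  | 0, _ => 1
  | k+1, s => BP k s * (-s-k)

def BF (m : ℕ) (s : ℂ) : ℂ :=
  - (∑ r ∈ Finset.Icc 1 m, ((bernoulli r : ℚ) : ℂ) / r.factorial * BP (r-1) s)
  + (-1)^(m+1) / m.factorial * (BP m s * BI m s)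

def Bf (m : ℕ) : ℝ → ℂ := (Ioi (1:ℝ)).indicator (fun t => (BBar m t : ℂ))

lemma BI_integrable (m : ℕ) (a : ℂ) (ha : a.re < -1) :
    IntegrableOn (fun t : ℝ => (BBar m t : ℂ) * (t:ℂ)^a) (Ioi 1) := by
  obtain ⟨C, hC⟩ := BBar_bdd m
  exact (integrableOn_Ioi_cpow_of_lt ha one_pos).bdd_mul (c := C)
    (Complex.measurable_ofReal.comp (BBar_meas m)).aestronglyMeasurable (Eventually.of_forall hC)

lemma mellin_Bf_gen (m : ℕ) (g : ℝ → ℂ) (s : ℂ) :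
    mellin (fun t => g t * Bf m t) s = ∫ t in Ioi (1:ℝ), g t * (BBar m t : ℂ) * (t:ℂ)^(s-1) := by
  rw [mellin]
  have : (fun t : ℝ => (t:ℂ)^(s-1) • (g t * Bf m t)) =
      (Ioi (1:ℝ)).indicator (fun t => g t * (BBar m t : ℂ) * (t:ℂ)^(s-1)) := by
    ext t
    by_cases h : t ∈ Ioi (1:ℝ) <;> simp [Bf, h]
    ring
  rw [this, setIntegral_indicator measurableSet_Ioi]
  congr 2
  ext t; simp

lemma BI_deriv (m : ℕ) (s : ℂ) (hs : 1 - (m:ℝ) < s.re) :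
    IntegrableOn (fun t : ℝ => (Real.log t : ℂ) * (BBar m t : ℂ) * (t:ℂ)^(-s-m)) (Ioi 1) ∧
    HasDerivAt (BI m)
      (- ∫ t in Ioi (1:ℝ), (Real.log t : ℂ) * (BBar m t : ℂ) * (t:ℂ)^(-s-m)) s := by
  obtain ⟨C, hC⟩ := BBar_bdd m
  have hmeas : Measurable (Bf m) :=
    (Complex.measurable_ofReal.comp (BBar_meas m)).indicator measurableSet_Ioi
  have hb : ∀ t, ‖Bf m t‖ ≤ C := fun t => by
    by_cases h : t ∈ Ioi (1:ℝ)
    · simpa [Bf, h] using hC t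
    · simpa [Bf, h] using (norm_nonneg _).trans (hC t)
  have hloc : LocallyIntegrableOn (Bf m) (Ioi 0) := by
    refine LocallyIntegrable.locallyIntegrableOn ?_ _
    exact (locallyIntegrable_const C).mono hmeas.aestronglyMeasurable
      (Eventually.of_forall fun t => (hb t).trans (le_abs_self C))
  have htop : Bf m =O[atTop] (fun t : ℝ => t ^ (-(0:ℝ))) := by
    simp only [neg_zero, Real.rpow_zero]
    exact IsBigO.of_bound C (Eventually.of_forall fun t => by simpa using hb t)
  have hbot : Bf m =O[𝓝[>] 0] (fun t : ℝ => t ^ (-((-s-m+1).re - 1))) := by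
    refine IsBigO.of_bound 0 ?_
    have : Iio (1:ℝ) ∈ 𝓝[>] (0:ℝ) := mem_nhdsWithin_of_mem_nhds (Iio_mem_nhds one_pos)
    filter_upwards [this] with t ht
    have : t ∉ Ioi (1:ℝ) := by simp at ht ⊢; exact ht.le
    simp [Bf, this]
  have key := mellin_hasDerivAt_of_isBigO_rpow (s := -s-m+1) hloc htop
    (by simp; linarith) hbot (by linarith)
  have e : (fun t : ℝ => Real.log t • Bf m t) = fun t => (Real.log t : ℂ) * Bf m t := by
    ext t; simp
  rw [e, mellin_Bf_gen] at key
  constructor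
  · have h1 := key.1.mono_set (Ioi_subset_Ioi (zero_le_one))
    refine h1.congr_fun (fun t ht => ?_) measurableSet_Ioi
    simp only [Bf, indicator_of_mem ht, smul_eq_mul, add_sub_cancel_right]
    ring
  · have h2 : BI m = fun s => mellin (Bf m) (-s-m+1) := by
      ext s
      have := mellin_Bf_gen m 1 (-s-m+1)
      simp only [Pi.one_apply, one_mul, add_sub_cancel_right] at this
      rw [this]; rfl
    rw [h2]
    have h3 : HasDerivAt (fun s : ℂ => -s-m+1) (-1) s :=
      (((hasDerivAt_id s).neg).sub_const _).add_const _
    have h4 := key.2.comp s h3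
    simp only [add_sub_cancel_right] at h4
    convert! h4 using 1
    ring

lemma BI_step (m : ℕ) (hm : 1 ≤ m) (s : ℂ) (hs : 1 < s.re) :
    (m+1) * BI m s + (-s-m) * BI (m+1) s = - ((bernoulli (m+1) : ℚ) : ℂ) := by
  have i1 := (BI_integrable m (-s-m) (by
    have : (0:ℝ) ≤ m := Nat.cast_nonneg m
    simp; linarith)).const_mul ((m:ℂ)+1)
  have i2 := (BI_integrable (m+1) (-s-(m+1:ℕ)) (by
    have : (0:ℝ) ≤ m := Nat.cast_nonneg m
    simp; linarith)).const_mul (-s-m)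
  have i3 := i1.add i2
  have hI : (m+1) * BI m s + (-s-m) * BI (m+1) s = ∫ t in Ioi (1:ℝ),
      (((m:ℂ)+1) * ((BBar m t : ℂ) * (t:ℂ)^(-s-m)) +
        (-s-m) * ((BBar (m+1) t : ℂ) * (t:ℂ)^(-s-(m+1:ℕ)))) := by
    rw [BI, BI, integral_add i1 i2, integral_const_mul, integral_const_mul]
  rw [hI]
  have hlim := intervalIntegral_tendsto_integral_Ioi 1 i3 tendsto_id
  refine tendsto_nhds_unique hlim ?_
  have hv : ∀ x : ℝ, 1 ≤ x → ∫ t in (1:ℝ)..x,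
      (((m:ℂ)+1) * ((BBar m t : ℂ) * (t:ℂ)^(-s-m)) +
        (-s-m) * ((BBar (m+1) t : ℂ) * (t:ℂ)^(-s-(m+1:ℕ)))) =
      (BBar (m+1) x : ℂ) * (x:ℂ)^(-s-m) - ((bernoulli (m+1) : ℚ) : ℂ) := by
    intro x hx
    have := integral_eq_of_hasDerivAt_off_countable_of_le
      (fun t : ℝ => (BBar (m+1) t : ℂ) * (t:ℂ)^(-s-m)) 
      (fun t : ℝ => ((m:ℂ)+1) * ((BBar m t : ℂ) * (t:ℂ)^(-s-m)) +
        (-s-m) * ((BBar (m+1) t : ℂ) * (t:ℂ)^(-s-(m+1:ℕ)))) hx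
      (countable_range ((↑) : ℤ → ℝ)) ?_ ?_ ?_
    · rw [this]
      have h1 : BBar (m+1) 1 = bernoulli (m+1) := by
        rw [BBar_eq]; simp [bernoulliFun_eval_zero]
      simp [h1]
    · refine ContinuousOn.mul (Complex.continuous_ofReal.comp
        (BBar_cont (m+1) (by omega))).continuousOn (fun t ht => ?_)
      exact (Complex.continuousAt_ofReal_cpow_const _ _
        (Or.inr (zero_lt_one.trans_le ht.1).ne')).continuousWithinAt
    · rintro t ⟨ht, ht'⟩
      have d1 := (BBar_deriv m t ht').ofReal_comp
      have hne : -s-m ≠ 0 := by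
        intro h
        have := congrArg Complex.re h
        have h0 : (0:ℝ) ≤ m := Nat.cast_nonneg m
        simp at this; linarith
      have d2 := hasDerivAt_ofReal_cpow_const (x := t) (zero_lt_one.trans ht.1).ne' hne
      have d3 := d1.mul d2
      convert! d3 using 1
      rw [show -s - ((m+1:ℕ):ℂ) = -s - m - 1 by push_cast; ring]
      push_cast
      ring
    · rw [intervalIntegrable_iff_integrableOn_Ioc_of_le hx]
      exact IntegrableOn.mono_set i3 Ioc_subset_Ioi_self
  have h0 : Tendsto (fun x : ℝ => (BBar (m+1) x : ℂ) * (x:ℂ)^(-s-m)) atTop (𝓝 0) := by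
    obtain ⟨C, hC⟩ := BBar_bdd (m+1)
    have hp : 0 < s.re + m := by positivity
    have h1 := (tendsto_rpow_neg_atTop hp).const_mul C
    rw [mul_zero] at h1
    refine squeeze_zero_norm' ?_ h1
    filter_upwards [eventually_gt_atTop 0] with x hx
    rw [norm_mul, Complex.norm_cpow_eq_rpow_re_of_pos hx]
    have : (-s - (m:ℂ)).re = -(s.re + m) := by simp; ring
    rw [this]
    gcongr
    exact hC x
  have h2 := h0.sub_const ((bernoulli (m+1) : ℚ) : ℂ)
  rw [zero_sub] at h2
  refine h2.congr' ?_
  filter_upwards [eventually_ge_atTop 1] with x hx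
  exact (hv x hx).symm

lemma BF_succ (m : ℕ) (hm : 1 ≤ m) (s : ℂ) (hs : 1 < s.re) : BF (m+1) s = BF m s := by
  have h := BI_step m hm s hs
  have hb : (-1:ℂ)^(m+1) * ((bernoulli (m+1) : ℚ) : ℂ) = ((bernoulli (m+1) : ℚ) : ℂ) := by
    rcases Nat.even_or_odd (m+1) with he | ho
    · rw [he.neg_one_pow, one_mul]
    · rw [bernoulli_eq_zero_of_odd ho (by omega)]; simp
  rw [BF, BF, Finset.sum_Icc_succ_top (by omega)]
  have hf : ((m+1).factorial : ℂ) = (m+1) * m.factorial := by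
    rw [Nat.factorial_succ]; push_cast; ring
  have h1 : (m.factorial : ℂ) ≠ 0 := by exact_mod_cast m.factorial_ne_zero
  have h2 : (m:ℂ) + 1 ≠ 0 := by exact_mod_cast Nat.succ_ne_zero m
  have h3 : BI m s = (-((bernoulli (m+1) : ℚ) : ℂ) - (-s-m) * BI (m+1) s) / (m+1) := by
    rw [eq_div_iff h2]; linear_combination h
  rw [hf, h3, Nat.add_sub_cancel, BP, pow_succ (-1:ℂ) (m+1)]
  field_simp
  linear_combination (BP m s) * hb

lemma BF_one (s : ℂ) (hs : 1 < s.re) : riemannZeta s = 1/(s-1) + BF 1 s := by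
  have h := LSeries_eq_mul_integral (1 : ℕ → ℂ) zero_le_one hs (LSeriesSummable_one_iff.mpr hs)
    (by
      simp only [Pi.one_apply, Finset.sum_const, Nat.card_Icc, Real.rpow_one]
      refine IsBigO.of_bound 1 (Eventually.of_forall fun n => ?_)
      simp)
  rw [LSeries_one_eq_riemannZeta hs] at h
  have e : ∫ t in Ioi (1:ℝ), (∑ k ∈ Finset.Icc 1 ⌊t⌋₊, (1 : ℕ → ℂ) k) * (t:ℂ) ^ (-(s + 1)) =
      ∫ t in Ioi (1:ℝ), (((t:ℂ)^(-s) - (1/2) * (t:ℂ)^(-s-1)) -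
        (BBar 1 t : ℂ) * (t:ℂ)^(-s-(1:ℕ))) := by
    refine setIntegral_congr_fun measurableSet_Ioi fun t ht => ?_
    have ht0 : (0:ℝ) < t := zero_lt_one.trans ht
    have hc : (t:ℂ)^(-s) = t * (t:ℂ)^(-s-1) := by
      rw [Complex.cpow_sub _ _ (by exact_mod_cast ht0.ne'), Complex.cpow_one]
      have : (t:ℂ) ≠ 0 := by exact_mod_cast ht0.ne'
      field_simp
    have hfl : ((⌊t⌋₊ : ℕ) : ℂ) = ((⌊t⌋ : ℤ) : ℂ) := by
      rw [← Int.natCast_floor_eq_floor ht0.le]; simp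
    simp only [Pi.one_apply, Finset.sum_const, Nat.card_Icc, BBar_eq, bernoulliFun_one, Int.fract,
      nsmul_eq_mul, mul_one, Nat.add_sub_cancel, Nat.cast_one, hfl]
    rw [hc, show -(s+1) = -s-1 by ring]
    push_cast
    ring
  have i1 : IntegrableOn (fun t : ℝ => (t:ℂ)^(-s)) (Ioi 1) :=
    integrableOn_Ioi_cpow_of_lt (by simpa using hs) one_pos
  have i2 : IntegrableOn (fun t : ℝ => (1/2) * (t:ℂ)^(-s-1)) (Ioi 1) :=
    (integrableOn_Ioi_cpow_of_lt (by simp; linarith) one_pos).const_mul _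
  have i3 := BI_integrable 1 (-s-(1:ℕ)) (by simp; linarith)
  have i12 : IntegrableOn (fun t : ℝ => (t:ℂ)^(-s) - (1/2) * (t:ℂ)^(-s-1)) (Ioi 1) := i1.sub i2
  rw [e, integral_sub i12 i3, integral_sub i1 i2, integral_const_mul,
    integral_Ioi_cpow_of_lt (by simpa using hs) one_pos,
    integral_Ioi_cpow_of_lt (by simp; linarith) one_pos] at h
  rw [h, BF]
  have hs0 : s ≠ 0 := by rintro rfl; simp at hs; linarith
  have hs1 : s - 1 ≠ 0 := by
    intro h; rw [sub_eq_zero.1 h] at hs; simp at hs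
  have hs2 : -s + 1 ≠ 0 := by intro h; apply hs1; linear_combination -h
  simp [BP, BI]
  rw [show -s+1 = -(s-1) by ring]
  field_simp
  ring

lemma BF_all (m : ℕ) (hm : 1 ≤ m) (s : ℂ) (hs : 1 < s.re) :
    riemannZeta s = 1/(s-1) + BF m s := by
  induction m, hm using Nat.le_induction with
  | base => exact BF_one s hs
  | succ k hk ih => rw [BF_succ k hk s hs, ih]

lemma BP_diff (k : ℕ) : Differentiable ℂ (BP k) := by
  induction k with
  | zero => exact differentiable_const _
  | succ k ih =>
    change Differentiable ℂ (fun s => BP k s * (-s-k))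
    fun_prop

lemma BF_diff (m : ℕ) (s : ℂ) (hs : 1 - (m:ℝ) < s.re) : DifferentiableAt ℂ (BF m) s := by
  have h1 := (BI_deriv m s hs).2.differentiableAt
  have h2 : ∀ k, DifferentiableAt ℂ (BP k) s := fun k => BP_diff k s
  unfold BF
  have := h2 m
  refine DifferentiableAt.add (DifferentiableAt.neg ?_) ((this.mul h1).const_mul _)
  refine DifferentiableAt.fun_sum fun r _ => (h2 _).const_mul _

lemma zeta0_eq (m : ℕ) (hm : 1 ≤ m) : EqOn riemannZeta₀ (BF m) {s : ℂ | 1 - (m:ℝ) < s.re} := by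
  have ho : IsOpen {s : ℂ | 1 - (m:ℝ) < s.re} := isOpen_lt continuous_const Complex.continuous_re
  have hg : DifferentiableOn ℂ (BF m) {s : ℂ | 1 - (m:ℝ) < s.re} :=
    fun s hs => (BF_diff m s hs).differentiableWithinAt
  refine (differentiable_riemannZeta₀.differentiableOn.analyticOnNhd ho).eqOn_of_preconnected_of_eventuallyEq
    (hg.analyticOnNhd ho) (convex_halfSpace_re_gt _).isPreconnected (z₀ := 2) ?_ ?_
  · have : (0:ℝ) ≤ m := Nat.cast_nonneg m
    simp; linarith
  · have : {s : ℂ | 1 < s.re} ∈ 𝓝 (2:ℂ) :=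
      (isOpen_lt continuous_const Complex.continuous_re).mem_nhds (by simp)
    filter_upwards [this] with s hs
    have hs1 : s ≠ 1 := by rintro rfl; simp at hs
    have h1 := BF_all m hm s hs
    rw [riemannZeta_eq_inv_sub_add hs1, one_div] at h1
    exact add_left_cancel h1

/-- coefficients of derivative of t^j log t -/
def QR (j : ℕ) : ℕ → ℝ × ℝ
  | 0 => (1, 0)
  | k+1 => ((QR j k).1 * (j - k), (QR j k).2 * (j-k) + (QR j k).1)

lemma BP_val (j k : ℕ) : BP k (-(j:ℂ)) = ((QR j k).1 : ℂ) := by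
  induction k with
  | zero => simp [BP, QR]
  | succ k ih => simp [BP, QR, ih]

lemma BP_der (j k : ℕ) : HasDerivAt (BP k) (-((QR j k).2 : ℂ)) (-(j:ℂ)) := by
  induction k with
  | zero => 
    simp only [QR, Complex.ofReal_zero, neg_zero]
    exact hasDerivAt_const (-(j:ℂ)) (1:ℂ)
  | succ k ih =>
    have h3 : HasDerivAt (fun s : ℂ => -s-k) (-1) (-(j:ℂ)) := ((hasDerivAt_id _).neg).sub_const _
    have := ih.mul h3
    convert! this using 1
    simp [QR, BP_val]
    ring

lemma iter_eq (j k : ℕ) : ∀ t : ℝ, 0 < t →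
    iteratedDeriv k (fun t : ℝ => t^j * Real.log t) t =
      ((QR j k).1 * Real.log t + (QR j k).2) * t^((j:ℤ)-k) := by
  induction k with
  | zero => intro t ht; simp [QR]; ring
  | succ k ih =>
    intro t ht
    rw [iteratedDeriv_succ]
    have : iteratedDeriv k (fun t : ℝ => t^j * Real.log t) =ᶠ[𝓝 t]
        fun t => ((QR j k).1 * Real.log t + (QR j k).2) * t^((j:ℤ)-k) := by
      filter_upwards [Ioi_mem_nhds ht] with x hx using ih x hx
    rw [this.deriv_eq]
    have d1 := (((Real.hasDerivAt_log ht.ne').const_mul (QR j k).1).add_const (QR j k).2).mul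
      (hasDerivAt_zpow ((j:ℤ)-k) t (Or.inl ht.ne'))
    refine (HasDerivAt.deriv (d1)).trans ?_
    have hz : t^((j:ℤ)-k) = t * t^((j:ℤ)-(k+1:ℕ)) := by
      rw [← zpow_one_add₀ ht.ne']; congr 1; push_cast; ring
    rw [hz, show (j:ℤ)-k-1 = (j:ℤ)-(k+1:ℕ) by push_cast; ring]
    simp only [QR]
    field_simp
    push_cast
    ring

/-- `C_j = −ζ'(−j) − 1/(j+1)²`; in particular `C_j` does not depend on the auxiliary
integer `n ≥ j+1` used in its definition. -/
theorem Cclassical_eq_neg_zeta_deriv (j n : ℕ) (hn : j + 1 ≤ n) :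
    ((Cclassical n j : ℝ) : ℂ) =
      -deriv riemannZeta (-(j:ℂ)) - 1 / ((j:ℂ) + 1) ^ 2 := by
  have hre : 1 - ((n+1:ℕ):ℝ) < (-(j:ℂ)).re := by
    have : (j:ℝ) + 1 ≤ n := by exact_mod_cast hn
    simp; linarith
  have hj1 : -(j:ℂ) ≠ 1 := by
    intro h
    have := congrArg Complex.re h
    have h0 : (0:ℝ) ≤ j := Nat.cast_nonneg j
    simp at this; linarith
  have ho : IsOpen {s : ℂ | 1 - ((n+1:ℕ):ℝ) < s.re} :=
    isOpen_lt continuous_const Complex.continuous_re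
  have hz0 : deriv riemannZeta₀ (-(j:ℂ)) = deriv (BF (n+1)) (-(j:ℂ)) :=
    ((zeta0_eq (n+1) (by omega)).eventuallyEq_of_mem (ho.mem_nhds hre)).deriv_eq
  have hz := deriv_riemannZeta_eq_neg_inv_sub_sq_add hj1
  obtain ⟨hint, hder⟩ := BI_deriv (n+1) _ hre
  have i1 := BI_integrable (n+1) (-(-(j:ℂ))-(n+1:ℕ)) (by
    simp only [Complex.sub_re, Complex.neg_re, Complex.natCast_re] at hre ⊢; linarith)
  have hBF : HasDerivAt (BF (n+1))
      (-(∑ r ∈ Finset.Icc 1 (n+1), ((bernoulli r : ℚ) : ℂ) / r.factorial * (-((QR j (r-1)).2 : ℂ)))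
        + (-1)^(n+1+1) / (n+1).factorial * (-((QR j (n+1)).2 : ℂ) * BI (n+1) (-(j:ℂ)) +
          BP (n+1) (-(j:ℂ)) * (- ∫ t in Ioi (1:ℝ), (Real.log t : ℂ) * (BBar (n+1) t : ℂ) *
            (t:ℂ)^(-(-(j:ℂ))-(n+1:ℕ))))) (-(j:ℂ)) := by
    refine HasDerivAt.add (HasDerivAt.neg ?_) (((BP_der j (n+1)).mul hder).const_mul _)
    exact HasDerivAt.fun_sum fun r _ => (BP_der j _).const_mul _
  rw [hz, hz0, hBF.deriv, BP_val]
  have hsum : ∀ r ∈ Finset.Icc 1 (n+1), ((bernoulli r : ℚ) : ℝ) / r.factorial *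
      iteratedDeriv (r-1) (fun t : ℝ => t^j * Real.log t) 1 =
      ((bernoulli r : ℚ) : ℝ) / r.factorial * (QR j (r-1)).2 := by
    intro r _
    rw [iter_eq j _ 1 one_pos]; simp
  have hI : ((∫ t in Set.Ioi (1:ℝ), BBar (n+1) t *
        iteratedDeriv (n+1) (fun t : ℝ => t^j * Real.log t) t : ℝ) : ℂ) =
      (QR j (n+1)).1 * (∫ t in Ioi (1:ℝ), (Real.log t : ℂ) * (BBar (n+1) t : ℂ) *
            (t:ℂ)^(-(-(j:ℂ))-(n+1:ℕ))) + (QR j (n+1)).2 * BI (n+1) (-(j:ℂ)) := by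
    rw [BI, ← integral_const_mul, ← integral_const_mul,
      ← integral_add (hint.const_mul _) (i1.const_mul _), ← integral_complex_ofReal]
    refine setIntegral_congr_fun measurableSet_Ioi fun t ht => ?_
    have hc : (t:ℂ)^(-(-(j:ℂ))-(n+1:ℕ)) = ((t^((j:ℤ)-(n+1:ℕ)) : ℝ) : ℂ) := by
      rw [Complex.ofReal_zpow, ← Complex.cpow_intCast]
      congr 1; push_cast; ring
    simp only [hc, iter_eq j (n+1) t (zero_lt_one.trans ht)]
    push_cast
    ring
  rw [Cclassical, Finset.sum_congr rfl hsum]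
  rw [Complex.ofReal_add, Complex.ofReal_mul, hI]
  generalize (∫ t in Ioi (1:ℝ), (Real.log t : ℂ) * (BBar (n+1) t : ℂ) *
            (t:ℂ)^(-(-(j:ℂ))-(n+1:ℕ))) = J
  push_cast
  simp only [mul_neg, Finset.sum_neg_distrib]
  have : (-(j:ℂ) - 1)^2 = ((j:ℂ)+1)^2 := by ring
  rw [inv_pow, this, one_div]
  ring

end
end

section
/- For every integer j ≥ 0: exp(ζ'(−j)) = exp(P_j(1)) · ∏_{k=1}^{∞} (1 + 1/k)^{B_{j+1}(k+1)/(j+1)} · exp(P_j(k+1) − P_j(k)), and this infinite product converges absolutely. -/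
open scoped BigOperators

noncomputable section

/-- Bernoulli number `B_r` (with `B_1 = -1/2`), as a complex number. -/
def BC (r : ℕ) : ℂ := ((bernoulli r : ℚ) : ℂ)

/-- Bernoulli polynomial `B_m(x)` evaluated at a complex number. -/
def BPC (m : ℕ) (x : ℂ) : ℂ := Polynomial.aeval x (Polynomial.bernoulli m)

/-- `φ_{j,r} = (d/dt)^r [t^{j+1} log t/(j+1) − t^{j+1}/(j+1)²]` at `t = 1`. -/
def phiJR (j r : ℕ) : ℝ :=
  iteratedDeriv r (fun t : ℝ => t^(j+1) * Real.log t / (j+1) - t^(j+1) / ((j:ℝ)+1)^2) 1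

/-- The polynomial `P_j(x) = Σ_{r=0}^{j+1} (B_r/r!)·φ_{j,r}·x^{j+1−r}`. -/
def Pj (j : ℕ) (x : ℂ) : ℂ :=
  ∑ r ∈ Finset.range (j+2), BC r / r.factorial * ((phiJR j r : ℝ) : ℂ) * x^(j+1-r)

def dd (r : ℕ) (a : ℂ) : ℂ := ∏ i ∈ Finset.range r, (a - i)

lemma dd_zero (a : ℂ) : dd 0 a = 1 := by simp [dd]
lemma dd_succ (r : ℕ) (a : ℂ) : dd (r+1) a = dd r a * (a - r) := by
  simp [dd, Finset.prod_range_succ]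
lemma dd_add (r m : ℕ) (a : ℂ) : dd (r+m) a = dd r a * dd m (a - r) := by
  simp only [dd, Finset.prod_range_add]
  congr 1
  apply Finset.prod_congr rfl
  intro i _
  push_cast; ring
lemma dd_succ' (m : ℕ) (a : ℂ) : dd (m+1) a = a * dd m (a - 1) := by
  rw [add_comm, dd_add]; simp [dd]

def TT (n : ℕ) (a : ℂ) (u : ℝ) : ℂ :=
  (1 + (u:ℂ)) ^ a - ∑ m ∈ Finset.range n, dd m a / (m.factorial : ℂ) * (u:ℂ) ^ m

lemma TT_zero_right (n : ℕ) (a : ℂ) : TT (n+1) a 0 = 0 := by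
  simp [TT, Finset.sum_range_succ', dd_zero]

lemma TT_deriv (n : ℕ) (a : ℂ) (u : ℝ) (hu : 0 ≤ u) :
    HasDerivAt (TT (n+1) a) (a * TT n (a-1) u) u := by
  have h1 : HasDerivAt (fun z : ℂ => (1 + z) ^ a) (a * (1 + (u:ℂ)) ^ (a-1)) (u:ℂ) := by
    have := ((hasDerivAt_id (u:ℂ)).const_add 1).cpow_const (c := a) (by
      left; simp; linarith)
    simpa using this
  have h2 : HasDerivAt (fun z : ℂ => ∑ m ∈ Finset.range (n+1), dd m a / (m.factorial : ℂ) * z ^ m)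
      (∑ m ∈ Finset.range (n+1), dd m a / (m.factorial : ℂ) * (m * (u:ℂ) ^ (m-1))) (u:ℂ) := by
    apply HasDerivAt.fun_sum
    intro m _
    exact (hasDerivAt_pow m (u:ℂ)).const_mul _
  have h3 := (h1.sub h2).comp_ofReal
  have h4 : HasDerivAt (TT (n+1) a) _ u := h3
  convert h4 using 1
  simp only [TT, mul_sub]
  congr 1
  rw [Finset.sum_range_succ', Finset.mul_sum]
  simp only [Nat.cast_zero, zero_mul, mul_zero, add_zero]
  apply Finset.sum_congr rfl
  intro m _
  rw [dd_succ', Nat.factorial_succ]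
  have : (m.factorial : ℂ) ≠ 0 := by exact_mod_cast m.factorial_ne_zero
  have h' : ((m:ℂ)+1) ≠ 0 := by exact_mod_cast m.succ_ne_zero
  push_cast
  field_simp

lemma TT_bound (n : ℕ) : ∀ R : ℝ, 0 ≤ R → ∃ K : ℝ, 0 ≤ K ∧ ∀ a : ℂ, ‖a‖ ≤ R → ∀ u : ℝ, 0 ≤ u →
    u ≤ 1 → ‖TT n a u‖ ≤ K * u ^ n := by
  induction n with
  | zero =>
    intro R hR
    refine ⟨2 ^ R, by positivity, ?_⟩
    intro a ha u h0 h1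
    have : (1 + (u:ℂ)) = ((1+u : ℝ) : ℂ) := by push_cast; rfl
    simp only [TT, Finset.range_zero, Finset.sum_empty, sub_zero, pow_zero, mul_one]
    rw [this, Complex.norm_cpow_eq_rpow_re_of_pos (by linarith)]
    calc (1+u) ^ a.re ≤ (1+u)^R := Real.rpow_le_rpow_of_exponent_le (by linarith)
            ((Complex.re_le_norm a).trans ha)
      _ ≤ 2 ^ R := Real.rpow_le_rpow (by linarith) (by linarith) hR
  | succ n ih =>
    intro R hR
    obtain ⟨K, hK, h⟩ := ih (R+1) (by linarith)
    refine ⟨R * K, by positivity, ?_⟩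
    intro a ha u h0 h1
    have := norm_image_sub_le_of_norm_deriv_le_segment' (f := TT (n+1) a) (a := 0) (b := u)
      (C := R * K * u ^ n) (f' := fun v => a * TT n (a-1) v)
      (fun x hx => (TT_deriv n a x hx.1).hasDerivWithinAt) (by
        intro v hv
        rw [norm_mul, mul_assoc]
        have hb := h (a-1) ((norm_sub_le _ _).trans (by simpa using ha)) v hv.1 (hv.2.le.trans h1)
        have : v ^ n ≤ u ^ n := pow_le_pow_left₀ hv.1 hv.2.le n
        gcongr
        exact hb.trans (by gcongr)) u ⟨h0, le_rfl⟩
    rw [TT_zero_right, sub_zero, sub_zero] at this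
    rw [pow_succ, ← mul_assoc]; exact this

/-- the coefficient identity -/
lemma bern_coeff (n : ℕ) : ∑ r ∈ Finset.range n, ((bernoulli r : ℚ) : ℂ) / (r.factorial : ℂ) /
    ((n - r).factorial : ℂ) = if n = 1 then 1 else 0 := by
  have h := sum_bernoulli n
  have h2 : ∑ r ∈ Finset.range n, ((bernoulli r : ℚ)) / (r.factorial : ℚ) /
    ((n - r).factorial : ℚ) = (if n = 1 then 1 else 0) / n.factorial := by
    rw [← h, Finset.sum_div]
    apply Finset.sum_congr rfl
    intro r hr
    have hr : r ≤ n := (Finset.mem_range.1 hr).le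
    rw [Nat.cast_choose ℚ hr]
    have := n.factorial_ne_zero
    have := r.factorial_ne_zero
    have := (n-r).factorial_ne_zero
    field_simp
  have h3 := congrArg (fun q : ℚ => (q : ℂ)) h2
  push_cast at h3
  rw [h3]
  split_ifs with hn
  · subst hn; simp
  · simp

/-- bracket vanishes -/
lemma bracket (M : ℕ) (a u : ℂ) : ∑ r ∈ Finset.range (M+1), ((bernoulli r : ℚ) : ℂ) / (r.factorial : ℂ)
    * dd r a * u ^ r * (∑ m ∈ Finset.range (M+2-r), dd m (a - r) / (m.factorial : ℂ) * u ^ m - 1)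
    = a * u := by
  have h1 : ∀ r ∈ Finset.range (M+1), ((bernoulli r : ℚ) : ℂ) / (r.factorial : ℂ)
    * dd r a * u ^ r * (∑ m ∈ Finset.range (M+2-r), dd m (a - r) / (m.factorial : ℂ) * u ^ m - 1)
    = ∑ n ∈ Finset.Ico (r+1) (M+2), ((bernoulli r : ℚ) : ℂ) / (r.factorial : ℂ) /
    ((n - r).factorial : ℂ) * (dd n a * u ^ n) := by
    intro r hr
    have hr := Finset.mem_range.1 hr
    rw [show M + 2 - r = (M + 1 - r) + 1 by omega, Finset.sum_range_succ']
    simp only [dd_zero, Nat.factorial_zero, pow_zero, Nat.cast_one, div_one, mul_one,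
      add_sub_cancel_right]
    rw [Finset.sum_Ico_eq_sum_range, Finset.mul_sum, show M + 2 - (r+1) = M + 1 - r by omega]
    apply Finset.sum_congr rfl
    intro m _
    rw [show r + 1 + m = r + (m+1) by ring, dd_add r (m+1), show r + (m+1) - r = m+1 by omega]
    ring
  rw [Finset.sum_congr rfl h1]
  rw [Finset.sum_comm' (t' := Finset.range (M+2)) (s' := fun n => Finset.range n)]
  · simp_rw [← Finset.sum_mul, bern_coeff]
    simp [dd]
  · intro r n
    simp only [Finset.mem_range, Finset.mem_Ico]
    omega

def HH (M : ℕ) (k : ℕ) (a : ℂ) : ℂ :=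
  a * ((k:ℂ)+1) ^ (a-1) - ∑ r ∈ Finset.range (M+1), ((bernoulli r : ℚ) : ℂ) / (r.factorial : ℂ)
    * dd r a * (((k:ℂ)+2) ^ (a - r) - ((k:ℂ)+1) ^ (a - r))

lemma HH_eq (M k : ℕ) (a : ℂ) : HH M k a = - (((k:ℂ)+1) ^ a *
   ∑ r ∈ Finset.range (M+1), ((bernoulli r : ℚ) : ℂ) / (r.factorial : ℂ)
    * dd r a * (1/((k:ℂ)+1)) ^ r * TT (M+2-r) (a - r) (1/((k:ℝ)+1))) := by
  have hk : ((k:ℂ)+1) ≠ 0 := by exact_mod_cast k.succ_ne_zero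
  have e1 : ((k:ℂ)+1) ^ (a-1) = ((k:ℂ)+1)^a * (1/((k:ℂ)+1)) := by
    rw [Complex.cpow_sub _ _ hk, Complex.cpow_one]; ring
  have e2 : ∀ r : ℕ, ((k:ℂ)+1) ^ (a-r) = ((k:ℂ)+1)^a * (1/((k:ℂ)+1))^r := by
    intro r
    rw [Complex.cpow_sub _ _ hk, Complex.cpow_natCast, one_div_pow]
    field_simp
  have e3 : ∀ r : ℕ, ((k:ℂ)+2) ^ (a-r) = ((k:ℂ)+1)^(a-r) * (1 + 1/((k:ℂ)+1))^(a-r) := by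
    intro r
    have := Complex.mul_cpow_ofReal_nonneg (a := (k:ℝ)+1) (b := 1 + 1/((k:ℝ)+1)) (by positivity)
      (by positivity) (a-r)
    push_cast at this
    rw [← this]
    congr 1
    field_simp
    ring
  have b := bracket M a (1/((k:ℂ)+1))
  rw [HH, e1]
  have : a * (((k:ℂ)+1)^a * (1/((k:ℂ)+1))) = ((k:ℂ)+1)^a * (a * (1/((k:ℂ)+1))) := by ring
  rw [this, ← b, Finset.mul_sum, Finset.mul_sum, ← Finset.sum_sub_distrib, ← Finset.sum_neg_distrib]
  apply Finset.sum_congr rfl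
  intro r _
  rw [e3, e2, TT]
  push_cast
  ring

lemma dd_bound (r : ℕ) (R : ℝ) (a : ℂ) (ha : ‖a‖ ≤ R) : ‖dd r a‖ ≤ (R + r) ^ r := by
  rw [dd, norm_prod]
  calc _ ≤ ∏ i ∈ Finset.range r, (R + r) := by
        apply Finset.prod_le_prod
        · intros; positivity
        · intro i hi
          have : (i:ℝ) ≤ r := by exact_mod_cast (Finset.mem_range.1 hi).le
          refine (norm_sub_le _ _).trans ?_
          simp only [Complex.norm_natCast]
          linarith
    _ = _ := by simp

lemma HH_bound (M : ℕ) (R : ℝ) (hR : 0 ≤ R) : ∃ C : ℝ, 0 ≤ C ∧ ∀ a : ℂ, ‖a‖ ≤ R → ∀ k : ℕ,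
    ‖HH M k a‖ ≤ C * ((k:ℝ)+1) ^ (R - (M + 2)) := by
  choose K hK hT using fun r : ℕ => TT_bound (M+2-r) (R + r) (by positivity)
  refine ⟨∑ r ∈ Finset.range (M+1), ‖((bernoulli r : ℚ) : ℂ) / (r.factorial : ℂ)‖ * (R+r)^r * K r,
    Finset.sum_nonneg (fun r _ => by have := hK r; positivity), ?_⟩
  intro a ha k
  have hx : (0:ℝ) < (k:ℝ)+1 := by positivity
  have hx1 : (1:ℝ) ≤ (k:ℝ)+1 := by simp
  have hu : 1 / ((k:ℝ)+1) ≤ 1 := by rw [div_le_one hx]; exact hx1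
  rw [HH_eq, norm_neg, norm_mul]
  have n1 : ‖((k:ℂ)+1)^a‖ ≤ ((k:ℝ)+1)^R := by
    have : (k:ℂ)+1 = (((k:ℝ)+1 : ℝ) : ℂ) := by push_cast; rfl
    rw [this, Complex.norm_cpow_eq_rpow_re_of_pos hx]
    exact Real.rpow_le_rpow_of_exponent_le hx1 ((Complex.re_le_norm a).trans ha)
  have n2 : ‖∑ r ∈ Finset.range (M+1), ((bernoulli r : ℚ) : ℂ) / (r.factorial : ℂ)
    * dd r a * (1/((k:ℂ)+1)) ^ r * TT (M+2-r) (a - r) (1/((k:ℝ)+1))‖ ≤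
    (∑ r ∈ Finset.range (M+1), ‖((bernoulli r : ℚ) : ℂ) / (r.factorial : ℂ)‖ * (R+r)^r * K r) *
      (1/((k:ℝ)+1)) ^ (M+2) := by
    rw [Finset.sum_mul]
    refine (norm_sum_le _ _).trans (Finset.sum_le_sum ?_)
    intro r hr
    have hr := Finset.mem_range.1 hr
    have nx : ‖(1/((k:ℂ)+1)) ^ r‖ = (1/((k:ℝ)+1))^r := by
      have : (1/((k:ℂ)+1)) = ((1/((k:ℝ)+1) : ℝ) : ℂ) := by push_cast; rfl
      rw [this, norm_pow, Complex.norm_real, Real.norm_of_nonneg (by positivity)]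
    have hTT := hT r (a - r) ((norm_sub_le _ _).trans (by simpa using ha)) (1/((k:ℝ)+1))
      (by positivity) hu
    have := hK r
    rw [norm_mul, norm_mul, norm_mul, nx]
    calc _ ≤ ‖((bernoulli r : ℚ) : ℂ) / (r.factorial : ℂ)‖ * (R+r)^r * (1/((k:ℝ)+1))^r *
          (K r * (1/((k:ℝ)+1))^(M+2-r)) := by
          gcongr
          exact dd_bound r R a ha
      _ = ‖((bernoulli r : ℚ) : ℂ) / (r.factorial : ℂ)‖ * (R+r)^r * K r *
          ((1/((k:ℝ)+1))^r * (1/((k:ℝ)+1))^(M+2-r)) := by ring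
      _ = _ := by rw [← pow_add, show r + (M+2-r) = M+2 by omega]
  have e : ((k:ℝ)+1)^(R-(M+2)) = ((k:ℝ)+1)^R * (1/((k:ℝ)+1))^(M+2) := by
    rw [Real.rpow_sub hx]
    have : ((M:ℝ)+2) = ((M+2 : ℕ):ℝ) := by push_cast; rfl
    rw [this, Real.rpow_natCast, one_div_pow]
    field_simp
  rw [e]
  calc _ ≤ ((k:ℝ)+1)^R * ((∑ r ∈ Finset.range (M+1), ‖((bernoulli r : ℚ) : ℂ) / (r.factorial : ℂ)‖ * (R+r)^r * K r) *
      (1/((k:ℝ)+1)) ^ (M+2)) := by gcongr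
    _ = _ := by ring

def GG (M : ℕ) (a x : ℂ) : ℂ := ∑ r ∈ Finset.range (M+1),
  ((bernoulli r : ℚ) : ℂ) / (r.factorial : ℂ) * dd r a * x ^ (a - r)

lemma HH_GG (M k : ℕ) (a : ℂ) : HH M k a = a * ((k:ℂ)+1) ^ (a-1) -
    (GG M a (((k+1:ℕ):ℂ)+1) - GG M a ((k:ℂ)+1)) := by
  rw [HH, GG, GG, ← Finset.sum_sub_distrib]
  congr 1
  apply Finset.sum_congr rfl
  intro r _
  rw [mul_sub]
  rw [show (((k+1:ℕ):ℂ)+1) = (k:ℂ)+2 by push_cast; ring]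

lemma HH_summable (M : ℕ) (R : ℝ) (hR : 0 ≤ R) (hRM : R < M + 1) : ∃ u : ℕ → ℝ, Summable u ∧
    ∀ (k : ℕ) (a : ℂ), a ∈ Metric.ball 0 R → ‖HH M k a‖ ≤ u k := by
  obtain ⟨C, hC, h⟩ := HH_bound M R hR
  refine ⟨fun k => C * ((k:ℝ)+1) ^ (R - (M + 2)), ?_, fun k a ha => h a ?_ k⟩
  · apply Summable.mul_left
    have := (summable_nat_add_iff 1).2 (Real.summable_nat_rpow (p := R - (M+2)) |>.2 (by linarith))
    simpa using this
  · simpa using (Metric.mem_ball.1 ha).le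

lemma HH_sum_neg (M : ℕ) (R : ℝ) (hR : 0 ≤ R) (hRM : R < M + 1) (a : ℂ) (ha : a ∈ Metric.ball 0 R)
    (hneg : a.re < 0) : ∑' k, HH M k a = a * riemannZeta (1 - a) + GG M a 1 := by
  obtain ⟨u, hu, hb⟩ := HH_summable M R hR hRM
  have hs : Summable (fun k => HH M k a) := Summable.of_norm_bounded hu (fun k => hb k a ha)
  have hre : 1 < (1 - a).re := by simp only [Complex.sub_re, Complex.one_re]; linarith
  have hz0 : Summable (fun k : ℕ => 1 / ((k:ℂ)+1)^(1-a)) := by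
    have := (summable_nat_add_iff 1).2 (Complex.summable_one_div_nat_cpow.2 hre)
    simpa using this
  have hz : HasSum (fun k : ℕ => ((k:ℂ)+1)^(a-1)) (riemannZeta (1-a)) := by
    rw [zeta_eq_tsum_one_div_nat_add_one_cpow hre]
    convert hz0.hasSum using 2 with k
    rw [one_div, ← Complex.cpow_neg, neg_sub]
  have hG : Filter.Tendsto (fun n : ℕ => GG M a ((n:ℂ)+1)) Filter.atTop (nhds 0) := by
    have : (0:ℂ) = ∑ r ∈ Finset.range (M+1),
      ((bernoulli r : ℚ) : ℂ) / (r.factorial : ℂ) * dd r a * 0 := by simp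
    rw [this]
    apply tendsto_finsetSum
    intro r _
    apply Filter.Tendsto.const_mul
    rw [tendsto_zero_iff_norm_tendsto_zero]
    have e : ∀ n : ℕ, ‖((n:ℂ)+1)^(a-r)‖ = ((n:ℝ)+1)^(-(r - a.re)) := by
      intro n
      have : (n:ℂ)+1 = (((n:ℝ)+1 : ℝ) : ℂ) := by push_cast; rfl
      rw [this, Complex.norm_cpow_eq_rpow_re_of_pos (by positivity)]
      simp
    simp_rw [e]
    have hr : (0:ℝ) ≤ r := by positivity
    have := (tendsto_rpow_neg_atTop (y := r - a.re) (by linarith)).comp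
      (Filter.tendsto_atTop_add_const_right _ (1:ℝ) (tendsto_natCast_atTop_atTop (R := ℝ)))
    exact this
  have hpart : ∀ n : ℕ, ∑ k ∈ Finset.range n, HH M k a =
      a * ∑ k ∈ Finset.range n, ((k:ℂ)+1)^(a-1) - (GG M a ((n:ℂ)+1) - GG M a 1) := by
    intro n
    simp_rw [HH_GG]
    rw [Finset.sum_sub_distrib, ← Finset.mul_sum,
      Finset.sum_range_sub (fun k : ℕ => GG M a ((k:ℂ)+1))]
    simp
  have l1 := hs.hasSum.tendsto_sum_nat
  have l2 := (hz.tendsto_sum_nat.const_mul a).sub (hG.sub_const (GG M a 1))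
  simp_rw [hpart] at l1
  rw [tendsto_nhds_unique l1 l2]
  ring

def ff : ℂ → ℂ := Function.update (fun a => a * riemannZeta (1-a)) 0 (-1)

lemma ff_diff : Differentiable ℂ ff := by
  have h1 : ∀ a : ℂ, a ≠ 0 → DifferentiableAt ℂ ff a := by
    intro a ha
    have : (fun a => a * riemannZeta (1-a)) =ᶠ[nhds a] ff := by
      filter_upwards [isOpen_ne.mem_nhds ha] with b hb
      rw [ff, Function.update_of_ne hb]
    refine DifferentiableAt.congr_of_eventuallyEq ?_ this.symm
    refine differentiableAt_id.mul ?_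
    have hz : DifferentiableAt ℂ riemannZeta (1 - a) := differentiableAt_riemannZeta (by
      intro h; apply ha; linear_combination -h)
    exact DifferentiableAt.comp a hz (by fun_prop)
  intro a
  by_cases ha : a = 0
  · subst ha
    refine (Complex.analyticAt_of_differentiable_on_punctured_nhds_of_continuousAt ?_ ?_).differentiableAt
    · filter_upwards [self_mem_nhdsWithin] with z hz using h1 z hz
    · rw [ff, continuousAt_update_same]
      have ht : Filter.Tendsto (fun a : ℂ => 1 - a) (nhdsWithin 0 {0}ᶜ) (nhdsWithin 1 {1}ᶜ) := by
        apply tendsto_nhdsWithin_of_tendsto_nhds_of_eventually_within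
        · have : ContinuousAt (fun a : ℂ => 1 - a) 0 := by fun_prop
          have := this.tendsto
          simp only [sub_zero] at this
          exact this.mono_left nhdsWithin_le_nhds
        · filter_upwards [self_mem_nhdsWithin] with z hz
          simpa using hz
      have := (riemannZeta_residue_one.comp ht).neg
      refine this.congr ?_
      intro x
      simp only [Function.comp]
      ring
  · exact h1 a ha

lemma dd_diff (r : ℕ) : Differentiable ℂ (dd r) := by
  unfold dd; fun_prop

lemma cpow_diff (c : ℂ) (hc : c ≠ 0) (r : ℂ) : Differentiable ℂ (fun a : ℂ => c ^ (a - r)) := by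
  intro a
  exact DifferentiableAt.const_cpow (by fun_prop) (Or.inl hc)

lemma GG_diff (M : ℕ) (x : ℂ) (hx : x ≠ 0) : Differentiable ℂ (fun a => GG M a x) := by
  unfold GG
  have := cpow_diff x hx
  have := dd_diff
  fun_prop

lemma HH_diff (M k : ℕ) : Differentiable ℂ (HH M k) := by
  have h1 : ((k:ℂ)+1) ≠ 0 := by exact_mod_cast k.succ_ne_zero
  have h2 : (((k+1:ℕ):ℂ)+1) ≠ 0 := by exact_mod_cast (k+1).succ_ne_zero
  have : HH M k = fun a => a * ((k:ℂ)+1) ^ (a-1) -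
    (GG M a (((k+1:ℕ):ℂ)+1) - GG M a ((k:ℂ)+1)) := by funext a; exact HH_GG M k a
  rw [this]
  exact (differentiable_id.mul (cpow_diff _ h1 1)).sub ((GG_diff M _ h2).sub (GG_diff M _ h1))

lemma main_identity (M : ℕ) (R : ℝ) (hR : 1 < R) (hRM : R < M + 1) :
    Set.EqOn ff (fun a => ∑' k, HH M k a - GG M a 1) (Metric.ball 0 R) := by
  obtain ⟨u, hu, hb⟩ := HH_summable M R (by linarith) hRM
  have hS := Complex.differentiableOn_tsum_of_summable_norm hu
    (fun k => (HH_diff M k).differentiableOn) Metric.isOpen_ball hb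
  refine AnalyticOnNhd.eqOn_of_preconnected_of_eventuallyEq (z₀ := -1)
    (ff_diff.differentiableOn.analyticOnNhd Metric.isOpen_ball)
    ((hS.sub (GG_diff M 1 one_ne_zero).differentiableOn).analyticOnNhd Metric.isOpen_ball)
    (convex_ball _ _).isPreconnected (by simpa using hR) ?_
  have o1 : IsOpen {a : ℂ | a.re < 0} := isOpen_lt Complex.continuous_re continuous_const
  filter_upwards [Metric.isOpen_ball.mem_nhds (show (-1:ℂ) ∈ Metric.ball 0 R by simpa using hR),
    o1.mem_nhds (show (-1:ℂ) ∈ {a : ℂ | a.re < 0} by simp)] with a h1 h2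
  have : a ≠ 0 := by rintro rfl; simp at h2
  simp only [ff, Function.update_of_ne this]
  rw [HH_sum_neg M R (by linarith) hRM a h1 h2]
  ring

lemma deriv_identity (j : ℕ) :
    HasSum (fun k => deriv (HH (j+1) k) ((j:ℂ)+1))
      (riemannZeta (-j) - (j+1) * deriv riemannZeta (-j) + deriv (fun a => GG (j+1) a 1) ((j:ℂ)+1)) ∧
    riemannZeta (-j) * (j+1) = ∑' k, HH (j+1) k ((j:ℂ)+1) - GG (j+1) ((j:ℂ)+1) 1 := by
  have hRM : (j:ℝ) + 3/2 < ((j+1:ℕ):ℝ) + 1 := by push_cast; linarith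
  have hj : (0:ℝ) ≤ j := by positivity
  have hmem : ((j:ℂ)+1) ∈ Metric.ball (0:ℂ) ((j:ℝ)+3/2) := by
    have : ‖(j:ℂ)+1‖ = (j:ℝ)+1 := by
      rw [show (j:ℂ)+1 = ((j+1:ℕ):ℂ) by push_cast; rfl, Complex.norm_natCast]; push_cast; rfl
    rw [mem_ball_zero_iff, this]; linarith
  have hne : ((j:ℂ)+1) ≠ 0 := by exact_mod_cast j.succ_ne_zero
  have hid := main_identity (j+1) ((j:ℝ)+3/2) (by linarith) hRM
  obtain ⟨u, hu, hb⟩ := HH_summable (j+1) ((j:ℝ)+3/2) (by linarith) hRM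
  have hS := Complex.differentiableOn_tsum_of_summable_norm hu
    (fun k => (HH_diff (j+1) k).differentiableOn) Metric.isOpen_ball hb
  have hD := Complex.hasSum_deriv_of_summable_norm hu
    (fun k => (HH_diff (j+1) k).differentiableOn) Metric.isOpen_ball hb hmem
  have e1 : (1 - ((j:ℂ)+1)) = -j := by ring
  constructor
  · refine Eq.subst (motive := fun z => HasSum (fun k => deriv (HH (j+1) k) ((j:ℂ)+1)) z) ?_ hD
    have hev : (fun a => ∑' k, HH (j+1) k a) =ᶠ[nhds ((j:ℂ)+1)]
        (fun a => a * riemannZeta (1-a) + GG (j+1) a 1) := by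
      filter_upwards [Metric.isOpen_ball.mem_nhds hmem, isOpen_ne.mem_nhds hne] with a h1 h2
      have := hid h1
      simp only [ff, Function.update_of_ne h2] at this
      rw [this]; ring
    rw [hev.deriv_eq]
    have hz : HasDerivAt riemannZeta (deriv riemannZeta (-j)) (1 - ((j:ℂ)+1)) := by
      rw [e1]
      refine (differentiableAt_riemannZeta ?_).hasDerivAt
      intro h
      have := congrArg Complex.re h
      simp at this
      linarith
    have hc : HasDerivAt (fun a : ℂ => 1 - a) (-1) ((j:ℂ)+1) := by
      simpa using (hasDerivAt_id ((j:ℂ)+1)).const_sub 1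
    have h2 := ((hasDerivAt_id ((j:ℂ)+1)).mul (hz.comp _ hc)).add
      ((GG_diff (j+1) 1 one_ne_zero) ((j:ℂ)+1)).hasDerivAt
    have h3 := h2.deriv
    refine Eq.trans h3 ?_
    simp only [Function.comp, e1, id]
    ring
  · have := hid hmem
    simp only [ff, Function.update_of_ne hne, e1] at this
    rw [← this]; ring

def ddp : ℕ → ℂ → ℂ
  | 0, _ => 0
  | r+1, a => ddp r a * (a - r) + dd r a

lemma dd_hasDeriv (r : ℕ) (a : ℂ) : HasDerivAt (dd r) (ddp r a) a := by
  induction r with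
  | zero =>
    have : dd 0 = fun _ => 1 := by funext a; exact dd_zero a
    rw [this]; exact hasDerivAt_const _ _
  | succ r ih =>
    have : dd (r+1) = fun a => dd r a * (a - r) := by funext a; exact dd_succ r a
    rw [this]
    have := ih.mul ((hasDerivAt_id a).sub_const (r:ℂ))
    refine this.congr_deriv ?_
    simp [ddp]

def dR (r : ℕ) (a : ℝ) : ℝ := ∏ i ∈ Finset.range r, (a - i)
def dRp : ℕ → ℝ → ℝ
  | 0, _ => 0
  | r+1, a => dRp r a * (a - r) + dR r a

lemma dR_cast (r : ℕ) (a : ℝ) : ((dR r a : ℝ) : ℂ) = dd r a := by simp [dR, dd]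
lemma dRp_cast (r : ℕ) (a : ℝ) : ((dRp r a : ℝ) : ℂ) = ddp r a := by
  induction r with
  | zero => simp [dRp, ddp]
  | succ r ih => simp [dRp, ddp, ih, dR_cast]

lemma phi_gen (j : ℕ) (r : ℕ) : ∀ t : ℝ, 0 < t →
    iteratedDeriv r (fun t : ℝ => t^(j+1) * Real.log t / (j+1) - t^(j+1) / ((j:ℝ)+1)^2) t =
    t ^ ((j:ℤ)+1-r) * (dR r (j+1) * Real.log t / (j+1) + dRp r (j+1) / (j+1) - dR r (j+1)/((j:ℝ)+1)^2) := by
  have hj : (j:ℝ)+1 ≠ 0 := by positivity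
  induction r with
  | zero =>
    intro t ht
    have : t ^ ((j:ℤ)+1-(0:ℕ)) = t^(j+1) := by
      rw [Nat.cast_zero, sub_zero]; exact_mod_cast zpow_natCast t (j+1)
    rw [this]
    simp [dR, dRp]
    ring
  | succ r ih =>
    intro t ht
    rw [iteratedDeriv_succ]
    have hev : iteratedDeriv r (fun t : ℝ => t^(j+1) * Real.log t / (j+1) - t^(j+1) / ((j:ℝ)+1)^2)
      =ᶠ[nhds t] fun t => t ^ ((j:ℤ)+1-r) * (dR r (j+1) * Real.log t / (j+1) + dRp r (j+1) / (j+1) - dR r (j+1)/((j:ℝ)+1)^2) := by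
      filter_upwards [isOpen_Ioi.mem_nhds ht] with x hx using ih x hx
    rw [hev.deriv_eq]
    have h1 := hasDerivAt_zpow ((j:ℤ)+1-r) t (Or.inl ht.ne')
    have h2 := ((((Real.hasDerivAt_log ht.ne').const_mul (dR r (j+1))).div_const ((j:ℝ)+1)).add_const
      (dRp r (j+1) / ((j:ℝ)+1))).sub_const (dR r (j+1)/((j:ℝ)+1)^2)
    refine Eq.trans (h1.mul h2).deriv ?_
    have e1 : t ^ ((j:ℤ)+1-(r+1:ℕ)) = t ^ ((j:ℤ)+1-r-1) := by congr 1; push_cast; ring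
    have e2 : t ^ ((j:ℤ)+1-r) = t ^ ((j:ℤ)+1-r-1) * t := by
      rw [← zpow_add_one₀ ht.ne']; congr 1; ring
    rw [e1, e2]
    have e3 : dR (r+1) ((j:ℝ)+1) = dR r (j+1) * ((j:ℝ)+1 - r) := by simp [dR, Finset.prod_range_succ]
    rw [e3, dRp]
    push_cast
    field_simp
    ring

lemma phi_cast (j r : ℕ) : ((phiJR j r : ℝ) : ℂ) =
    ddp r ((j:ℂ)+1) / ((j:ℂ)+1) - dd r ((j:ℂ)+1) / ((j:ℂ)+1)^2 := by
  rw [phiJR, phi_gen j r 1 one_pos]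
  push_cast [dR_cast, dRp_cast]
  simp

lemma dd_nat (n r : ℕ) (h : r ≤ n) : dd r (n:ℂ) = (n.descFactorial r : ℂ) := by
  induction r with
  | zero => simp [dd]
  | succ r ih =>
    rw [dd_succ, ih (by omega), Nat.descFactorial_succ]
    push_cast [Nat.cast_sub (show r ≤ n by omega)]
    ring

lemma BPC_eq (j : ℕ) (x : ℂ) : BPC (j+1) x = ∑ r ∈ Finset.range (j+2),
    ((bernoulli r : ℚ) : ℂ) / (r.factorial : ℂ) * dd r ((j:ℂ)+1) * x^(j+1-r) := by
  rw [BPC, Polynomial.bernoulli, map_sum]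
  apply Finset.sum_congr rfl
  intro r hr
  have hr : r ≤ j+1 := by have := Finset.mem_range.1 hr; omega
  have := dd_nat (j+1) r hr
  push_cast at this
  rw [this, Nat.descFactorial_eq_factorial_mul_choose]
  have hf : (r.factorial : ℂ) ≠ 0 := by exact_mod_cast r.factorial_ne_zero
  rw [Polynomial.aeval_monomial]
  simp
  field_simp
  exact Or.inl trivial

lemma BPC_diff (j : ℕ) (x : ℂ) : BPC (j+1) (x+1) = BPC (j+1) x + (j+1) * x^j := by
  have := congrArg (Polynomial.aeval x) (Polynomial.bernoulli_comp_one_add_X (j+1))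
  rw [Polynomial.aeval_comp] at this
  simp at this
  rw [BPC, BPC, add_comm x 1, this]

lemma cpow_nat' (j r : ℕ) (h : r ≤ j+1) (x : ℂ) (hx : x ≠ 0) :
    x ^ (((j:ℂ)+1) - r) = x ^ (j+1-r) := by
  rw [← Complex.cpow_natCast, Nat.cast_sub h]; push_cast; rfl

lemma GG_val (j : ℕ) (x : ℂ) (hx : x ≠ 0) : GG (j+1) ((j:ℂ)+1) x = BPC (j+1) x := by
  rw [GG, BPC_eq]
  apply Finset.sum_congr rfl
  intro r hr
  have hr : r ≤ j+1 := by have := Finset.mem_range.1 hr; omega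
  rw [cpow_nat' j r hr x hx]

lemma GG_deriv (j : ℕ) (x : ℂ) (hx : x ≠ 0) : HasDerivAt (fun a => GG (j+1) a x)
    ((j+1) * Pj j x + BPC (j+1) x * (Complex.log x + 1 / (j+1))) ((j:ℂ)+1) := by
  have hj : (j:ℂ)+1 ≠ 0 := by exact_mod_cast j.succ_ne_zero
  have h : HasDerivAt (fun a => GG (j+1) a x) (∑ r ∈ Finset.range (j+1+1),
     ((((bernoulli r : ℚ) : ℂ) / (r.factorial : ℂ) * ddp r ((j:ℂ)+1)) * x ^ (((j:ℂ)+1) - r) +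
     ((bernoulli r : ℚ) : ℂ) / (r.factorial : ℂ) * dd r ((j:ℂ)+1) * (x ^ (((j:ℂ)+1) - r) * Complex.log x * 1)))
      ((j:ℂ)+1) := by
    unfold GG
    apply HasDerivAt.fun_sum
    intro r _
    exact ((dd_hasDeriv r _).const_mul _).mul
      (((hasDerivAt_id ((j:ℂ)+1)).sub_const (r:ℂ)).const_cpow (Or.inl hx))
  refine h.congr_deriv ?_
  rw [BPC_eq, Pj, Finset.mul_sum, Finset.sum_mul, ← Finset.sum_add_distrib]
  apply Finset.sum_congr rfl
  intro r hr
  have hr : r ≤ j+1 := by have := Finset.mem_range.1 hr; omega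
  rw [cpow_nat' j r hr x hx, phi_cast, BC]
  have hf : (r.factorial : ℂ) ≠ 0 := by exact_mod_cast r.factorial_ne_zero
  field_simp
  ring

lemma HH_val (j k : ℕ) : HH (j+1) k ((j:ℂ)+1) = 0 := by
  have h1 : ((k:ℂ)+1) ≠ 0 := by exact_mod_cast k.succ_ne_zero
  have h2 : (((k+1:ℕ):ℂ)+1) ≠ 0 := by exact_mod_cast (k+1).succ_ne_zero
  rw [HH_GG, GG_val _ _ h1, GG_val _ _ h2]
  push_cast
  rw [BPC_diff, add_sub_cancel_right, Complex.cpow_natCast]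
  ring

lemma HH_deriv (j k : ℕ) : deriv (HH (j+1) k) ((j:ℂ)+1) =
    -(((j:ℂ)+1) * (BPC (j+1) ((k:ℂ)+2) / ((j:ℂ)+1) * (Complex.log ((k:ℂ)+2) - Complex.log ((k:ℂ)+1))
      + (Pj j ((k:ℂ)+2) - Pj j ((k:ℂ)+1)))) := by
  have hj : (j:ℂ)+1 ≠ 0 := by exact_mod_cast j.succ_ne_zero
  have h1 : ((k:ℂ)+1) ≠ 0 := by exact_mod_cast k.succ_ne_zero
  have h2 : (((k+1:ℕ):ℂ)+1) ≠ 0 := by exact_mod_cast (k+1).succ_ne_zero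
  have : HH (j+1) k = fun a => a * ((k:ℂ)+1) ^ (a-1) -
    (GG (j+1) a (((k+1:ℕ):ℂ)+1) - GG (j+1) a ((k:ℂ)+1)) := by funext a; exact HH_GG (j+1) k a
  rw [this]
  have hd := ((hasDerivAt_id ((j:ℂ)+1)).mul
    (((hasDerivAt_id ((j:ℂ)+1)).sub_const (1:ℂ)).const_cpow (c := (k:ℂ)+1) (Or.inl h1))).sub
    ((GG_deriv j _ h2).sub (GG_deriv j _ h1))
  refine Eq.trans hd.deriv ?_
  have e : (((k+1:ℕ):ℂ)+1) = (k:ℂ)+2 := by push_cast; ring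
  have b := BPC_diff j ((k:ℂ)+1)
  rw [show (k:ℂ)+1+1 = (k:ℂ)+2 by ring] at b
  rw [e]
  simp only [id, add_sub_cancel_right, Complex.cpow_natCast]
  have b' : BPC (j+1) ((k:ℂ)+1) = BPC (j+1) ((k:ℂ)+2) - (j+1) * ((k:ℂ)+1)^j := by
    rw [b]; ring
  rw [b']
  field_simp
  ring

lemma term_eq (j k : ℕ) : (1 + 1/((k:ℂ)+1)) ^ (BPC (j+1) ((k:ℂ)+2) / ((j:ℂ)+1)) *
          Complex.exp (Pj j ((k:ℂ)+2) - Pj j ((k:ℂ)+1)) =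
    Complex.exp (-(1/((j:ℂ)+1)) * deriv (HH (j+1) k) ((j:ℂ)+1)) := by
  have hj : (j:ℂ)+1 ≠ 0 := by exact_mod_cast j.succ_ne_zero
  have h1 : ((k:ℂ)+1) ≠ 0 := by exact_mod_cast k.succ_ne_zero
  have hk2 : ((k:ℂ)+2) ≠ 0 := by exact_mod_cast (k+1).succ_ne_zero
  have e : (1 + 1/((k:ℂ)+1)) = ((k:ℂ)+2)/((k:ℂ)+1) := by field_simp; ring
  have hl : Complex.log (1 + 1/((k:ℂ)+1)) = Complex.log ((k:ℂ)+2) - Complex.log ((k:ℂ)+1) := by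
    have r1 : (1 + 1/((k:ℂ)+1)) = ((((k:ℝ)+2)/((k:ℝ)+1) : ℝ) : ℂ) := by rw [e]; push_cast; rfl
    have r2 : (k:ℂ)+2 = (((k:ℝ)+2 : ℝ) : ℂ) := by push_cast; rfl
    have r3 : (k:ℂ)+1 = (((k:ℝ)+1 : ℝ) : ℂ) := by push_cast; rfl
    rw [r1, r2, r3, ← Complex.ofReal_log (by positivity), ← Complex.ofReal_log (by positivity),
      ← Complex.ofReal_log (by positivity), Real.log_div (by positivity) (by positivity)]
    push_cast; rfl
  have hne : (1 + 1/((k:ℂ)+1)) ≠ 0 := by rw [e]; exact div_ne_zero hk2 h1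
  rw [Complex.cpow_def_of_ne_zero hne, ← Complex.exp_add, hl, HH_deriv]
  congr 1
  field_simp


/-- The infinite product representation
`exp(ζ'(−j)) = exp(P_j(1)) ∏_{k≥1} (1+1/k)^{B_{j+1}(k+1)/(j+1)} exp(P_j(k+1)−P_j(k))`,
the product converging absolutely. -/
theorem exp_zeta_deriv_neg_nat_product (j : ℕ) :
    Complex.exp (deriv riemannZeta (-(j:ℂ))) =
      Complex.exp (Pj j 1) *
        ∏' k : ℕ, ((1 + 1/((k:ℂ)+1)) ^ (BPC (j+1) ((k:ℂ)+2) / ((j:ℂ)+1)) *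
          Complex.exp (Pj j ((k:ℂ)+2) - Pj j ((k:ℂ)+1))) ∧
    Summable (fun k : ℕ =>
      ‖(1 + 1/((k:ℂ)+1)) ^ (BPC (j+1) ((k:ℂ)+2) / ((j:ℂ)+1)) *
          Complex.exp (Pj j ((k:ℂ)+2) - Pj j ((k:ℂ)+1)) - 1‖) := by

  have hj : (j:ℂ)+1 ≠ 0 := by exact_mod_cast j.succ_ne_zero
  obtain ⟨h1, h2⟩ := deriv_identity j
  have hs := h1.mul_left (-(1/((j:ℂ)+1)))
  simp_rw [HH_val] at h2
  rw [tsum_zero, GG_val j 1 one_ne_zero] at h2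
  rw [(GG_deriv j 1 one_ne_zero).deriv] at hs
  have hz : riemannZeta (-j) = - BPC (j+1) 1 / (j+1) := by
    rw [eq_div_iff hj, h2]; ring
  have hv : -(1/((j:ℂ)+1)) * (riemannZeta (-j) - (j+1) * deriv riemannZeta (-j) +
      ((j+1) * Pj j 1 + BPC (j+1) 1 * (Complex.log 1 + 1 / (j+1)))) =
      deriv riemannZeta (-j) - Pj j 1 := by
    rw [hz, Complex.log_one]
    field_simp
    ring
  rw [hv] at hs
  simp_rw [term_eq]
  constructor
  · have hp := hs.cexp
    have := hp.tprod_eq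
    simp only [Function.comp_def] at this
    rw [this, ← Complex.exp_add]
    congr 1; ring
  · have hsn := hs.summable.norm
    have ht := hs.summable.tendsto_atTop_zero.norm
    rw [norm_zero] at ht
    have hev := ht.eventually (ge_mem_nhds (show (0:ℝ) < 1 by norm_num))
    refine Summable.of_norm_bounded_eventually_nat (hsn.mul_left 2) ?_
    filter_upwards [hev] with k hk
    rw [norm_norm]
    exact Complex.norm_exp_sub_one_le hk

end
end
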